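/- arXiv:2006.10624 — 3 statements merged into one kernel-verified Lean document; each statement's English description precedes it below -/
import Mathlib

section
/- Let V be a separable metrizable topological space endowed with its Borel σ-algebra and let I = [a,b] ⊂ ℝ. Let (ρ_t)_{t∈I} be a family of finite nonnegative Borel measures on V and (j_t)_{t∈I} a family of finite nonnegative measures on V×V, such that t ↦ ρ_t(B) and t ↦ j_t(C) are Lebesgue measurable for all measurable B ⊆ V, C ⊆ V×V, and ∫_a^b ρ_t(V) dt < ∞ and ∫_a^b j_t(V×V) dt < ∞. Assume that for every η ∈ C_c^∞((a,b)) and every bounded continuous ζ: V → ℝ: −∫_a^b η'(t) (∫_V ζ dρ_t) dt = ∫_a^b η(t) (∬_{V×V} (ζ(y) − ζ(x)) j_t(dx dy)) dt. Then there exists a unique curve t ↦ ρ̃_t of finite nonnegative measures on I such that ρ̃_t = ρ_t for a.e. t ∈ I and ρ̃ is continuous in the total variation norm; moreover ‖ρ̃_{t₂} − ρ̃_{t₁}‖_TV ≤ 2 ∫_{t₁}^{t₂} j_t(V×V) dt for all a ≤ t₁ ≤ t₂ ≤ b, and for every bounded Borel measurable φ: V → ℝ and all a ≤ t₁ ≤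 t₂ ≤ b: ∫_V φ dρ̃_{t₂} − ∫_V φ dρ̃_{t₁} = ∫_{t₁}^{t₂} ∬_{V×V} (φ(y) − φ(x)) j_t(dx dy) dt. -/
open MeasureTheory Filter Set
open scoped ENNReal

/-- The total variation distance between two (nonnegative) measures, expressed via
the lattice subtraction of measures: `‖μ − ν‖_TV = (μ − ν)(Y) + (ν − μ)(Y)`. -/
noncomputable def tvDist {Y : Type*} [MeasurableSpace Y]
    (μ ν : MeasureTheory.Measure Y) : ℝ≥0∞ :=
  (μ - ν) Set.univ + (ν - μ) Set.univ

open scoped Topology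


lemma dubois0 (a b : ℝ) (hab : a < b) (h : ℝ → ℝ) (hh : IntegrableOn h (Icc a b))
    (hw : ∀ η : ℝ → ℝ, ContDiff ℝ (⊤ : ℕ∞) η → HasCompactSupport η →
      tsupport η ⊆ Ioo a b → ∫ t in Icc a b, deriv η t * h t = 0) :
    ∃ c : ℝ, ∀ᵐ t ∂(volume : Measure ℝ), t ∈ Ioo a b → h t = c := by
  let B : ContDiffBump ((a + b) / 2 : ℝ) := ⟨(b - a) / 8, (b - a) / 4, by linarith, by linarith⟩
  let χ : ℝ → ℝ := B.normed volume
  have χ1 : ∫ x, χ x = 1 := B.integral_normed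
  have χs : ContDiff ℝ (⊤ : ℕ∞) χ := B.contDiff_normed
  have χt : tsupport χ = Metric.closedBall ((a + b) / 2 : ℝ) ((b - a) / 4) := B.tsupport_normed_eq
  have χc : HasCompactSupport χ := B.hasCompactSupport_normed
  let c : ℝ := ∫ t in Icc a b, χ t * h t
  refine ⟨c, ?_⟩
  have hbd : ∀ g : ℝ → ℝ, Continuous g → IntegrableOn (fun t => g t * h t) (Icc a b) := by
    intro g hg
    exact hh.continuousOn_mul hg.continuousOn isCompact_Icc
  have key := isOpen_Ioo.ae_eq_zero_of_integral_contDiff_smul_eq_zero (U := Ioo a b)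
    (f := fun t => h t - c) (μ := (volume : Measure ℝ)) ?_ ?_
  · filter_upwards [key] with t ht h2
    linarith [ht h2]
  · apply IntegrableOn.locallyIntegrableOn
    exact (hh.mono_set Ioo_subset_Icc_self).sub (integrableOn_const (by simp) (by simp))
  intro g gs gc gt
  let m : ℝ := ∫ x, g x
  let ψ : ℝ → ℝ := fun t => g t - m * χ t
  have ψs : ContDiff ℝ (⊤ : ℕ∞) ψ := gs.sub (contDiff_const.mul χs)
  have gi : Integrable g := gs.continuous.integrable_of_hasCompactSupport gc
  have χi : Integrable χ := χs.continuous.integrable_of_hasCompactSupport χc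
  have ψi : Integrable ψ := gi.sub (χi.const_mul m)
  have ψ0 : ∫ x, ψ x = 0 := by
    simp only [ψ]
    rw [integral_sub gi (χi.const_mul m), integral_const_mul, χ1]; simp [m]
  let K := tsupport g ∪ tsupport χ
  have Kc : IsCompact K := IsCompact.union gc χc
  have Kn : K.Nonempty := ⟨(a+b)/2, Or.inr (by rw [χt]; simp; linarith)⟩
  have Ks : K ⊆ Ioo a b := by
    apply union_subset gt
    rw [χt, Real.closedBall_eq_Icc]
    intro x hx
    constructor <;> linarith [hx.1, hx.2]
  obtain ⟨a', ha'⟩ := Kc.exists_isLeast Kn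
  obtain ⟨b', hb'⟩ := Kc.exists_isGreatest Kn
  have aa := (Ks ha'.1).1
  have bb := (Ks hb'.1).2
  have ab' : a' ≤ b' := ha'.2 hb'.1
  have ψz : ∀ t, t ∉ Icc a' b' → ψ t = 0 := by
    intro t ht
    have : t ∉ K := fun hk => ht ⟨ha'.2 hk, hb'.2 hk⟩
    have h1 : g t = 0 := image_eq_zero_of_notMem_tsupport fun h => this (Or.inl h)
    have h2 : χ t = 0 := image_eq_zero_of_notMem_tsupport fun h => this (Or.inr h)
    simp [ψ, h1, h2]
  let η : ℝ → ℝ := fun t => ∫ s in a..t, ψ s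
  have ηd : ∀ t, HasDerivAt η (ψ t) t := fun t =>
    intervalIntegral.integral_hasDerivAt_right (ψi.intervalIntegrable)
      (ψs.continuous.stronglyMeasurableAtFilter _ _) ψs.continuous.continuousAt
  have ηd' : deriv η = ψ := funext fun t => (ηd t).deriv
  have ηs : ContDiff ℝ (⊤ : ℕ∞) η := by
    rw [contDiff_infty_iff_deriv]
    exact ⟨fun t => (ηd t).differentiableAt, by rw [ηd']; exact ψs⟩
  have ηz : ∀ t, t ∉ Icc a' b' → η t = 0 := by
    intro t ht
    by_cases h1 : t < a'
    · apply intervalIntegral.integral_zero_ae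
      refine Eventually.of_forall fun s hs => ψz s fun h3 => ?_
      have := h3.1
      rcases le_total a t with h4 | h4
      · rw [uIoc_of_le h4] at hs; linarith [hs.2]
      · rw [uIoc_of_ge h4] at hs; linarith [hs.2]
    · have h2 : b' < t := by
        by_contra h3; exact ht ⟨not_lt.1 h1, not_lt.1 h3⟩
      have : η t = ∫ s, ψ s := by
        simp only [η]
        rw [intervalIntegral.integral_of_le (by linarith)]
        apply setIntegral_eq_integral_of_forall_compl_eq_zero
        intro x hx
        exact ψz x fun h3 => hx ⟨by linarith [h3.1], by linarith [h3.2]⟩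
      rw [this, ψ0]
  have ηt : tsupport η ⊆ Icc a' b' := by
    apply closure_minimal _ isClosed_Icc
    intro t ht
    by_contra h3
    exact ht (ηz t h3)
  have ηc : HasCompactSupport η := isCompact_Icc.of_isClosed_subset (isClosed_tsupport _) ηt
  have := hw η ηs ηc (ηt.trans fun x hx => ⟨by linarith [hx.1], by linarith [hx.2]⟩)
  rw [ηd'] at this
  have e1 : ∫ t in Icc a b, ψ t * h t = (∫ t in Icc a b, g t * h t) - m * c := by
    simp only [ψ, sub_mul, mul_assoc]
    rw [integral_sub (hbd g gs.continuous) ((hbd χ χs.continuous).const_mul m), integral_const_mul]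
  have e2 : m = ∫ t in Icc a b, g t := by
    symm
    apply setIntegral_eq_integral_of_forall_compl_eq_zero
    intro x hx
    exact image_eq_zero_of_notMem_tsupport fun h => hx (Ioo_subset_Icc_self (gt h))
  have e3 : ∫ x, g x • (h x - c) = ∫ x in Icc a b, g x * (h x - c) := by
    symm
    apply setIntegral_eq_integral_of_forall_compl_eq_zero
    intro x hx
    rw [image_eq_zero_of_notMem_tsupport fun h => hx (Ioo_subset_Icc_self (gt h))]; simp
  rw [e3]
  simp only [mul_sub]
  rw [integral_sub (hbd g gs.continuous) (gi.integrableOn.mul_const c), integral_mul_const, ← e2]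
  linarith

lemma dubois (a b : ℝ) (hab : a < b) (f g : ℝ → ℝ) (hf : IntegrableOn f (Icc a b))
    (hg : IntegrableOn g (Icc a b))
    (hw : ∀ η : ℝ → ℝ, ContDiff ℝ (⊤ : ℕ∞) η → HasCompactSupport η →
      tsupport η ⊆ Ioo a b → -∫ t in Icc a b, deriv η t * f t = ∫ t in Icc a b, η t * g t) :
    ∃ c : ℝ, ∀ᵐ t ∂(volume : Measure ℝ), t ∈ Ioo a b → f t = c + ∫ s in a..t, g s := by
  have gI : IntervalIntegrable g volume a b := by
    rw [intervalIntegrable_iff_integrableOn_Icc_of_le hab.le]; exact hg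
  let G : ℝ → ℝ := fun t => ∫ s in a..t, g s
  have GA : AbsolutelyContinuousOnInterval G a b :=
    gI.absolutelyContinuousOnInterval_intervalIntegral (by simp)
  have Gc : ContinuousOn G (Icc a b) := by
    have := GA.continuousOn; rwa [uIcc_of_le hab.le] at this
  have H : ∀ η : ℝ → ℝ, ContDiff ℝ (⊤ : ℕ∞) η → HasCompactSupport η →
      tsupport η ⊆ Ioo a b → ∫ t in Icc a b, deriv η t * (f t - G t) = 0 := by
    intro η ηs ηc ηt
    have dc : Continuous (deriv η) := ηs.continuous_deriv (by simp)
    have hz : ∀ t, t ∉ Ioo a b → η t = 0 := fun t ht =>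
      image_eq_zero_of_notMem_tsupport fun h => ht (ηt h)
    have ηA : AbsolutelyContinuousOnInterval η a b :=
      (ηs.of_le (by simp)).contDiffOn.absolutelyContinuousOnInterval
    have ip := ηA.integral_mul_deriv_eq_deriv_mul GA
    rw [hz a (by simp), hz b (by simp)] at ip
    have e1 : ∫ x in a..b, η x * deriv G x = ∫ x in Icc a b, η x * g x := by
      rw [integral_Icc_eq_integral_Ioc, ← intervalIntegral.integral_of_le hab.le]
      apply intervalIntegral.integral_congr_ae
      filter_upwards [gI.ae_hasDerivAt_integral] with x hx h2
      rw [(hx (uIoc_subset_uIcc h2) a (by simp)).deriv]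
    rw [e1, intervalIntegral.integral_of_le hab.le, ← integral_Icc_eq_integral_Ioc,
      ← hw η ηs ηc ηt] at ip
    simp only [mul_sub]
    rw [integral_sub (hf.continuousOn_mul dc.continuousOn isCompact_Icc)
      (show IntegrableOn (fun t => deriv η t * G t) (Icc a b) volume from
        (dc.continuousOn.mul Gc).integrableOn_Icc)]
    linarith
  obtain ⟨c, hc⟩ := dubois0 a b hab (fun t => f t - G t)
    (hf.sub Gc.integrableOn_Icc) H
  refine ⟨c, ?_⟩
  filter_upwards [hc] with t ht h2
  have := ht h2
  simp only [G] at this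
  linarith

lemma le_sub_add' {X : Type*} [MeasurableSpace X] (μ ν : Measure X) [IsFiniteMeasure ν] :
    μ ≤ (μ - ν) + ν := by
  let m : Measure X := sInf ((fun d => d + ν) '' {d | μ ≤ d + ν})
  have h1 : ν ≤ m := le_sInf (by rintro _ ⟨d, _, rfl⟩; exact Measure.le_add_left le_rfl)
  have h2 : μ ≤ m := le_sInf (by rintro _ ⟨d, hd, rfl⟩; exact hd)
  have h3 : m - ν ≤ μ - ν := by
    refine le_sInf fun d hd => ?_
    exact Measure.sub_le_of_le_add (sInf_le ⟨d, hd, rfl⟩)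
  calc μ ≤ m := h2
    _ = (m - ν) + ν := (Measure.sub_add_cancel_of_le h1).symm
    _ ≤ _ := by gcongr


lemma tvDist_comm' {Y : Type*} [MeasurableSpace Y] (μ ν : Measure Y) :
    tvDist μ ν = tvDist ν μ := add_comm _ _

lemma le_add_tv {Y : Type*} [MeasurableSpace Y] (μ ν : Measure Y) [IsFiniteMeasure ν] (A : Set Y) :
    μ A ≤ ν A + tvDist μ ν := by
  calc μ A ≤ ((μ - ν) + ν) A := le_sub_add' μ ν A
    _ = ν A + (μ - ν) A := by rw [Measure.add_apply, add_comm]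
    _ ≤ ν A + tvDist μ ν := by
        gcongr
        exact (measure_mono (subset_univ _)).trans le_self_add

lemma dense_aux (a b : ℝ) (hab : a < b) (p : ℝ → Prop)
    (hp : ∀ᵐ t ∂(volume : Measure ℝ), t ∈ Ioo a b → p t) :
    Icc a b ⊆ closure {t | t ∈ Ioo a b ∧ p t} := by
  have hd := Measure.dense_of_ae hp
  have h1 := hd.open_subset_closure_inter (isOpen_Ioo (a := a) (b := b))
  rw [← closure_Ioo hab.ne]
  refine closure_minimal (h1.trans (closure_mono ?_)) isClosed_closure
  rintro x ⟨hx, h2⟩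
  exact ⟨hx, h2 hx⟩

lemma omega_tendsto (a b : ℝ) (w : ℝ → ℝ≥0∞) (hw : ∫⁻ t in Icc a b, w t < ⊤) (t : ℝ)
    (ht : t ∈ Icc a b) :
    Tendsto (fun s => ∫⁻ x in uIoc s t, w x) (𝓝[Icc a b] t) (𝓝 0) := by
  have h := tendsto_setLIntegral_zero (μ := volume.restrict (Icc a b)) (f := w) hw.ne
    (l := 𝓝[Icc a b] t) (s := fun s => uIoc s t) ?_
  · refine h.congr' ?_
    filter_upwards [self_mem_nhdsWithin] with s hs
    rw [Measure.restrict_restrict measurableSet_uIoc, inter_eq_left.2]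
    exact uIoc_subset_uIcc.trans (uIcc_subset_Icc hs ht)
  · have h0 : Tendsto (fun s : ℝ => ENNReal.ofReal |t - s|) (𝓝[Icc a b] t) (𝓝 0) := by
      have : Continuous (fun s : ℝ => ENNReal.ofReal |t - s|) := by
        exact ENNReal.continuous_ofReal.comp (by fun_prop)
      have := this.tendsto t
      simp only [sub_self, abs_zero, ENNReal.ofReal_zero] at this
      exact this.mono_left nhdsWithin_le_nhds
    refine tendsto_of_tendsto_of_tendsto_of_le_of_le tendsto_const_nhds h0 (fun _ => zero_le) ?_
    intro s
    simp only [Function.comp]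
    exact (Measure.restrict_apply_le _ _).trans (by rw [Real.volume_uIoc])

lemma le_of_limit (G : Set ℝ) (a b t : ℝ) (hG : G ⊆ Icc a b) (ht : t ∈ closure G)
    (ω : ℝ → ℝ≥0∞) (hω : Tendsto ω (𝓝[Icc a b] t) (𝓝 0)) (x y : ℝ≥0∞)
    (h : ∀ s ∈ G, x ≤ y + ω s) : x ≤ y := by
  have := mem_closure_iff_nhdsWithin_neBot.1 ht
  have h1 : Tendsto (fun s => y + ω s) (𝓝[G] t) (𝓝 (y + 0)) :=
    tendsto_const_nhds.add (hω.mono_left (nhdsWithin_mono _ hG))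
  rw [add_zero] at h1
  exact ge_of_tendsto h1 (by filter_upwards [self_mem_nhdsWithin] with s hs using h s hs)

open ProbabilityTheory in
lemma bindint {X : Type*} [MeasurableSpace X] (κ : Kernel ℝ X) (μ : Measure ℝ)
    [IsFiniteMeasure (μ.bind κ)] (φ : X → ℝ) (hφ : Measurable φ) (hb : ∃ C : ℝ, ∀ x, |φ x| ≤ C) :
    Integrable (fun t => ∫ x, φ x ∂(κ t)) μ ∧
      ∫ x, φ x ∂(μ.bind κ) = ∫ t, ∫ x, φ x ∂(κ t) ∂μ := by
  obtain ⟨C, hC⟩ := hb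
  have hi : Integrable φ (μ.bind κ) :=
    Integrable.of_bound hφ.aestronglyMeasurable C (Eventually.of_forall hC)
  have e := Measure.comp_eq_comp_const_apply (κ := κ) (μ := μ)
  rw [e] at hi ⊢
  have h1 := hi.integral_comp
  have h2 := Kernel.integral_comp hi
  simp only [Kernel.const_apply] at h1 h2
  exact ⟨h1, h2⟩

lemma exists_det (V : Type*) [TopologicalSpace V] [TopologicalSpace.MetrizableSpace V]
    [TopologicalSpace.SeparableSpace V] [MeasurableSpace V] [BorelSpace V] :
    ∃ Z : Set (BoundedContinuousFunction V ℝ), Z.Countable ∧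
      ∀ μ ν : Measure V, IsFiniteMeasure μ → IsFiniteMeasure ν →
        (∀ ζ ∈ Z, ∫ x, ζ x ∂μ = ∫ x, ζ x ∂ν) → μ = ν := by
  let _ := TopologicalSpace.metrizableSpaceMetric V
  have : SecondCountableTopology V := UniformSpace.secondCountable_of_separable V
  let B := TopologicalSpace.countableBasis V
  have hB := TopologicalSpace.isBasis_countableBasis V
  let C : Set (Set V) := (fun s : Set (Set V) => ⋂₀ s) '' {s | s.Finite ∧ s ⊆ B}
  have hCb : TopologicalSpace.IsTopologicalBasis C :=
    TopologicalSpace.isTopologicalBasis_of_subbasis hB.eq_generateFrom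
  have hCc : C.Countable :=
    (Set.countable_ofPred_finite_subset (TopologicalSpace.countable_countableBasis V)).image _
  have hCpi : IsPiSystem C := by
    rintro _ ⟨s, hs, rfl⟩ _ ⟨t, ht, rfl⟩ _
    exact ⟨s ∪ t, ⟨hs.1.union ht.1, union_subset hs.2 ht.2⟩, sInter_union _ _⟩
  let toR : BoundedContinuousFunction V NNReal → BoundedContinuousFunction V ℝ := fun f =>
    BoundedContinuousFunction.comp (C := 1) (fun r : NNReal => (r : ℝ))
      (LipschitzWith.of_dist_le_mul fun x y => by simp [NNReal.dist_eq, Real.dist_eq]) f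
  have toR_apply : ∀ f x, toR f x = f x := fun f x => rfl
  have : Countable C := hCc
  let app : C → ℕ → BoundedContinuousFunction V NNReal := fun U n =>
    ((hCb.isOpen U.2).isClosed_compl).apprSeq n
  refine ⟨{BoundedContinuousFunction.const V 1} ∪ ⋃ U : C, ⋃ n : ℕ, {toR (app U n)},
    (countable_singleton _).union (countable_iUnion fun U => countable_iUnion fun n =>
      countable_singleton _), ?_⟩
  intro μ ν _ _ h
  have hu : μ univ = ν univ := by
    have := h (BoundedContinuousFunction.const V 1) (Or.inl rfl)
    simp only [BoundedContinuousFunction.const_apply, integral_const, smul_eq_mul, mul_one] at this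
    exact (measureReal_eq_measureReal_iff).1 this
  refine ext_of_generate_finite C ?_ hCpi ?_ hu
  · rw [‹BorelSpace V›.measurable_eq]; exact hCb.borel_eq_generateFrom
  intro U hU
  have hUo := hCb.isOpen hU
  have hc : μ Uᶜ = ν Uᶜ := by
    have t1 := HasOuterApproxClosed.tendsto_lintegral_apprSeq hUo.isClosed_compl μ
    have t2 := HasOuterApproxClosed.tendsto_lintegral_apprSeq hUo.isClosed_compl ν
    refine tendsto_nhds_unique t1 (t2.congr fun n => ?_)
    have h1 := h (toR (app ⟨U, hU⟩ n)) (Or.inr (mem_iUnion₂.2 ⟨⟨U, hU⟩, n, rfl⟩))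
    have e : ∀ m : Measure V, IsFiniteMeasure m →
        ∫⁻ x, (hUo.isClosed_compl.apprSeq n x : ℝ≥0∞) ∂m
          = ENNReal.ofReal (∫ x, toR (app ⟨U, hU⟩ n) x ∂m) := by
      intro m _
      rw [lintegral_coe_eq_integral]
      · rfl
      · exact (toR (app ⟨U, hU⟩ n)).integrable m
    rw [e μ inferInstance, e ν inferInstance, h1]
  have := measure_compl (μ := μ) hUo.measurableSet.compl (measure_ne_top _ _)
  have h' := measure_compl (μ := ν) hUo.measurableSet.compl (measure_ne_top _ _)
  rw [compl_compl] at this h'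
  rw [this, h', hu, hc]

lemma cancel_right' {Y : Type*} [MeasurableSpace Y] {μ ν τ : Measure Y} [IsFiniteMeasure τ]
    (h : μ + τ = ν + τ) : μ = ν := by
  rw [← Measure.add_sub_cancel (μ := μ) (ν := τ), h, Measure.add_sub_cancel]


open ProbabilityTheory in
lemma bind_add_left' {X : Type*} [MeasurableSpace X] (κ : Kernel ℝ X) (μ ν : Measure ℝ) :
    (μ + ν).bind κ = μ.bind κ + ν.bind κ := by
  ext A hA
  rw [Measure.add_apply, Measure.bind_apply hA κ.aemeasurable, Measure.bind_apply hA κ.aemeasurable,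
    Measure.bind_apply hA κ.aemeasurable, lintegral_add_measure]

open ProbabilityTheory in
lemma bind_le_add {X : Type*} [MeasurableSpace X] (κ : Kernel ℝ X) (a s t : ℝ) (A : Set X)
    (hA : MeasurableSet A) :
    ((volume.restrict (Ioc a s)).bind κ) A ≤ ((volume.restrict (Ioc a t)).bind κ) A
      + ∫⁻ x in uIoc s t, κ x univ := by
  rw [Measure.bind_apply hA κ.aemeasurable, Measure.bind_apply hA κ.aemeasurable]
  have : Ioc a s ⊆ Ioc a t ∪ uIoc s t := by
    intro x hx
    by_cases h : x ≤ t
    · exact Or.inl ⟨hx.1, h⟩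
    · right
      rw [mem_uIoc]
      right
      exact ⟨not_le.1 h, hx.2⟩
  calc ∫⁻ x in Ioc a s, κ x A ≤ ∫⁻ x in Ioc a t ∪ uIoc s t, κ x A := lintegral_mono_set this
    _ ≤ (∫⁻ x in Ioc a t, κ x A) + ∫⁻ x in uIoc s t, κ x A := lintegral_union_le _ _ _
    _ ≤ _ := by
      gcongr
      exact subset_univ _


/-- Continuous representative for the continuity equation: a measurable family
`(ρ_t, j_t)` satisfying the continuity equation in the weak (distributional) sense
admits a unique representative `ρ'` that is continuous in the total variation norm,
satisfies the TV estimate `‖ρ'_{t₂} − ρ'_{t₁}‖_TV ≤ 2∫_{t₁}^{t₂} j_t(V×V) dt`, and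
the integrated equation against every bounded Borel function. -/
theorem continuity_equation_continuous_representative
    {V : Type*} [TopologicalSpace V] [TopologicalSpace.MetrizableSpace V]
    [TopologicalSpace.SeparableSpace V] [MeasurableSpace V] [BorelSpace V]
    (a b : ℝ) (hab : a < b)
    (ρ : ℝ → Measure V) (j : ℝ → Measure (V × V))
    (hρfin : ∀ t ∈ Icc a b, ρ t Set.univ < ⊤)
    (hjfin : ∀ t ∈ Icc a b, j t Set.univ < ⊤)
    (hρmeas : ∀ B : Set V, MeasurableSet B → Measurable fun t => ρ t B)
    (hjmeas : ∀ C : Set (V × V), MeasurableSet C → Measurable fun t => j t C)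
    (hρint : ∫⁻ t in Icc a b, ρ t Set.univ < ⊤)
    (hjint : ∫⁻ t in Icc a b, j t Set.univ < ⊤)
    (hweak : ∀ η : ℝ → ℝ, ContDiff ℝ (⊤ : ℕ∞) η → HasCompactSupport η →
      tsupport η ⊆ Ioo a b →
      ∀ ζ : BoundedContinuousFunction V ℝ,
        -∫ t in Icc a b, deriv η t * ∫ x, ζ x ∂(ρ t)
          = ∫ t in Icc a b, η t * ∫ p : V × V, (ζ p.2 - ζ p.1) ∂(j t)) :
    ∃ ρ' : ℝ → Measure V,
      (∀ t ∈ Icc a b, ρ' t Set.univ < ⊤) ∧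
      (∀ᵐ t ∂(volume.restrict (Icc a b)), ρ' t = ρ t) ∧
      (∀ t₁ ∈ Icc a b, ∀ t₂ ∈ Icc a b, t₁ ≤ t₂ →
        tvDist (ρ' t₂) (ρ' t₁) ≤ 2 * ∫⁻ t in Icc t₁ t₂, j t Set.univ) ∧
      (∀ t₀ ∈ Icc a b,
        Tendsto (fun t => tvDist (ρ' t) (ρ' t₀)) (nhdsWithin t₀ (Icc a b))
          (nhds 0)) ∧
      (∀ φ : V → ℝ, Measurable φ → (∃ C : ℝ, ∀ x, |φ x| ≤ C) →
        ∀ t₁ ∈ Icc a b, ∀ t₂ ∈ Icc a b, t₁ ≤ t₂ →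
          (∫ x, φ x ∂(ρ' t₂)) - (∫ x, φ x ∂(ρ' t₁))
            = ∫ t in Icc t₁ t₂, ∫ p : V × V, (φ p.2 - φ p.1) ∂(j t)) ∧
      (∀ σ : ℝ → Measure V,
        (∀ᵐ t ∂(volume.restrict (Icc a b)), σ t = ρ t) →
        (∀ t₀ ∈ Icc a b,
          Tendsto (fun t => tvDist (σ t) (σ t₀)) (nhdsWithin t₀ (Icc a b))
            (nhds 0)) →
        ∀ t ∈ Icc a b, σ t = ρ' t) := by
  classical
  let κ : ProbabilityTheory.Kernel ℝ (V × V) := ⟨j, Measure.measurable_of_measurable_coe _ hjmeas⟩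
  let κρ : ProbabilityTheory.Kernel ℝ V := ⟨ρ, Measure.measurable_of_measurable_coe _ hρmeas⟩
  have hκ : ∀ t, κ t = j t := fun t => rfl
  have hκρ : ∀ t, κρ t = ρ t := fun t => rfl
  let JJ : Set ℝ → Measure (V × V) := fun S => (volume.restrict S).bind κ
  have JJu : ∀ S, JJ S univ = ∫⁻ t in S, j t univ := fun S => by
    simp only [JJ]
    rw [Measure.bind_apply MeasurableSet.univ κ.aemeasurable]
    rfl
  have JJfin : ∀ S, S ⊆ Icc a b → IsFiniteMeasure (JJ S) := fun S hS =>
    ⟨by rw [JJu]; exact (lintegral_mono_set hS).trans_lt hjint⟩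
  have ρfin' : IsFiniteMeasure ((volume.restrict (Icc a b)).bind κρ) :=
    ⟨by rw [Measure.bind_apply MeasurableSet.univ κρ.aemeasurable]; exact hρint⟩
  have jfin' : IsFiniteMeasure ((volume.restrict (Icc a b)).bind κ) := JJfin _ le_rfl
  let J1 : ℝ → Measure V := fun t => (JJ (Ioc a t)).map Prod.fst
  let J2 : ℝ → Measure V := fun t => (JJ (Ioc a t)).map Prod.snd
  have subI : ∀ t ∈ Icc a b, Ioc a t ⊆ Icc a b := fun t ht x hx => ⟨hx.1.le, hx.2.trans ht.2⟩
  have J1fin : ∀ t ∈ Icc a b, IsFiniteMeasure (J1 t) := fun t ht => by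
    have := JJfin _ (subI t ht)
    simp only [J1]; infer_instance
  have J2fin : ∀ t ∈ Icc a b, IsFiniteMeasure (J2 t) := fun t ht => by
    have := JJfin _ (subI t ht)
    simp only [J2]; infer_instance
  have ρfin : ∀ t ∈ Icc a b, IsFiniteMeasure (ρ t) := fun t ht => ⟨hρfin t ht⟩
  -- integral formula
  have intJ : ∀ S, S ⊆ Icc a b → ∀ φ : V → ℝ, Measurable φ → (∃ C : ℝ, ∀ x, |φ x| ≤ C) →
      ∫ t in S, ∫ p : V × V, (φ p.2 - φ p.1) ∂(j t)
        = ∫ x, φ x ∂((JJ S).map Prod.snd) - ∫ x, φ x ∂((JJ S).map Prod.fst) := by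
    intro S hS φ hφ ⟨C, hC⟩
    have := JJfin S hS
    have h := (bindint κ (volume.restrict S) (fun p : V × V => φ p.2 - φ p.1)
      ((hφ.comp measurable_snd).sub (hφ.comp measurable_fst))
      ⟨C + C, fun p => (abs_sub _ _).trans (add_le_add (hC _) (hC _))⟩).2
    simp only [hκ] at h
    rw [← h, integral_map measurable_snd.aemeasurable hφ.aestronglyMeasurable,
      integral_map measurable_fst.aemeasurable hφ.aestronglyMeasurable]
    apply integral_sub
    · exact Integrable.of_bound (hφ.comp measurable_snd).aestronglyMeasurable C
        (Eventually.of_forall fun p => hC _)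
    · exact Integrable.of_bound (hφ.comp measurable_fst).aestronglyMeasurable C
        (Eventually.of_forall fun p => hC _)
  obtain ⟨Z, Zc, hZ⟩ := exists_det V
  have step : ∀ ζ : BoundedContinuousFunction V ℝ, ∃ c : ℝ, ∀ᵐ t ∂(volume : Measure ℝ),
      t ∈ Ioo a b → ∫ x, ζ x ∂(ρ t) + ∫ x, ζ x ∂(J1 t) = c + ∫ x, ζ x ∂(J2 t) := by
    intro ζ
    have hm : Measurable ζ := ζ.continuous.measurable
    have hb : ∀ x, |ζ x| ≤ ‖ζ‖ := fun x => ζ.norm_coe_le_norm x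
    have i1 := (bindint κρ (volume.restrict (Icc a b)) ζ hm ⟨_, hb⟩).1
    have i2 := (bindint κ (volume.restrict (Icc a b)) (fun p : V × V => ζ p.2 - ζ p.1)
      ((hm.comp measurable_snd).sub (hm.comp measurable_fst))
      ⟨‖ζ‖ + ‖ζ‖, fun p => (abs_sub _ _).trans (add_le_add (hb _) (hb _))⟩).1
    obtain ⟨c, hc⟩ := dubois a b hab _ _ i1 i2 (fun η h1 h2 h3 => hweak η h1 h2 h3 ζ)
    refine ⟨c, ?_⟩
    filter_upwards [hc] with t ht h2
    have h3 := ht h2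
    have h4 := intJ (Ioc a t) (subI t (Ioo_subset_Icc_self h2)) ζ hm ⟨_, hb⟩
    rw [intervalIntegral.integral_of_le h2.1.le] at h3
    simp only [hκ, hκρ] at h3
    rw [h4] at h3
    rw [h3]
    simp only [J1, J2]
    ring
  choose c hc using step
  have hgood : ∀ᵐ t ∂(volume : Measure ℝ), t ∈ Ioo a b → ∀ ζ ∈ Z,
      ∫ x, ζ x ∂(ρ t) + ∫ x, ζ x ∂(J1 t) = c ζ + ∫ x, ζ x ∂(J2 t) := by
    have := (ae_ball_iff Zc).2 fun ζ _ => hc ζ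
    filter_upwards [this] with t ht h2 ζ hζ using ht ζ hζ h2
  let G : Set ℝ := {t | t ∈ Ioo a b ∧ ∀ ζ ∈ Z,
      ∫ x, ζ x ∂(ρ t) + ∫ x, ζ x ∂(J1 t) = c ζ + ∫ x, ζ x ∂(J2 t)}
  have Gcl : Icc a b ⊆ closure G := dense_aux a b hab _ hgood
  have GI : G ⊆ Icc a b := fun t ht => Ioo_subset_Icc_self ht.1
  have pair : ∀ s ∈ G, ∀ t ∈ G, ρ t + J1 t + J2 s = ρ s + J1 s + J2 t := by
    intro s hs t ht
    have := ρfin s (GI hs)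
    have := J1fin s (GI hs)
    have := J2fin s (GI hs)
    have := ρfin t (GI ht)
    have := J1fin t (GI ht)
    have := J2fin t (GI ht)
    refine hZ _ _ inferInstance inferInstance fun ζ hζ => ?_
    have e1 := hs.2 ζ hζ
    have e2 := ht.2 ζ hζ
    rw [integral_add_measure (ζ.integrable _) (ζ.integrable _),
      integral_add_measure (ζ.integrable _) (ζ.integrable _),
      integral_add_measure (ζ.integrable _) (ζ.integrable _),
      integral_add_measure (ζ.integrable _) (ζ.integrable _)]
    linarith
  let ω : ℝ → ℝ → ℝ≥0∞ := fun s t => ∫⁻ x in uIoc s t, j x univ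
  have ωcomm : ∀ s t, ω s t = ω t s := fun s t => by simp only [ω, uIoc_comm]
  have ωlim : ∀ t ∈ Icc a b, Tendsto (fun s => ω s t) (𝓝[Icc a b] t) (𝓝 0) := fun t ht =>
    omega_tendsto a b _ hjint t ht
  have J1le : ∀ s t A, MeasurableSet A → J1 s A ≤ J1 t A + ω s t := fun s t A hA => by
    simp only [J1]
    rw [Measure.map_apply measurable_fst hA, Measure.map_apply measurable_fst hA]
    exact bind_le_add κ a s t _ (measurable_fst hA)
  have J2le : ∀ s t A, MeasurableSet A → J2 s A ≤ J2 t A + ω s t := fun s t A hA => by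
    simp only [J2]
    rw [Measure.map_apply measurable_snd hA, Measure.map_apply measurable_snd hA]
    exact bind_le_add κ a s t _ (measurable_snd hA)
  have aI : a ∈ Icc a b := left_mem_Icc.2 hab.le
  have J2a : J2 a = 0 := by simp [J2, JJ]
  obtain ⟨s0, hs0⟩ : G.Nonempty := by
    rw [← closure_nonempty_iff]; exact ⟨a, Gcl aI⟩
  have := ρfin s0 (GI hs0)
  have := J1fin s0 (GI hs0)
  have := J2fin s0 (GI hs0)
  have le0 : J2 s0 ≤ ρ s0 + J1 s0 := by
    refine Measure.le_iff.2 fun A hA => ?_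
    refine le_of_limit G a b a GI (Gcl aI) _ (ωlim a aI) _ _ fun s hs => ?_
    calc J2 s0 A ≤ (ρ s + J1 s + J2 s0) A := by
          rw [Measure.add_apply]; exact le_add_self
      _ = (ρ s0 + J1 s0 + J2 s) A := by rw [pair s hs s0 hs0]
      _ ≤ (ρ s0 + J1 s0) A + ω s a := by
          rw [Measure.add_apply _ (J2 s)]
          gcongr
          have := J2le s a A hA
          simpa [J2a] using this
  let ρa : Measure V := ρ s0 + J1 s0 - J2 s0
  have ρafin : IsFiniteMeasure ρa := by simp only [ρa]; infer_instance
  have ρa_eq : ρa + J2 s0 = ρ s0 + J1 s0 := Measure.sub_add_cancel_of_le le0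
  have goodeq : ∀ t ∈ G, ρ t + J1 t = ρa + J2 t := by
    intro t ht
    apply cancel_right' (τ := J2 s0)
    rw [pair s0 hs0 t ht, ← ρa_eq, add_right_comm]
  have le1 : ∀ t ∈ Icc a b, J1 t ≤ ρa + J2 t := by
    intro t ht
    refine Measure.le_iff.2 fun A hA => ?_
    have hl : Tendsto (fun s => ω s t + ω s t) (𝓝[Icc a b] t) (𝓝 0) := by
      simpa using (ωlim t ht).add (ωlim t ht)
    refine le_of_limit G a b t GI (Gcl ht) _ hl _ _ fun s hs => ?_
    calc J1 t A ≤ J1 s A + ω s t := by rw [ωcomm]; exact J1le t s A hA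
      _ ≤ (ρ s + J1 s) A + ω s t := by
          gcongr; exact Measure.le_add_left le_rfl
      _ = ρa A + J2 s A + ω s t := by rw [goodeq s hs, Measure.add_apply]
      _ ≤ ρa A + (J2 t A + ω s t) + ω s t := by
          gcongr; exact J2le s t A hA
      _ = _ := by rw [Measure.add_apply]; ring
  let ρ' : ℝ → Measure V := fun t => ρa + J2 t - J1 t
  have ρ'fin : ∀ t ∈ Icc a b, IsFiniteMeasure (ρ' t) := fun t ht => by
    have := J2fin t ht
    simp only [ρ']; infer_instance
  have ρ'eq : ∀ t ∈ Icc a b, ρ' t + J1 t = ρa + J2 t := fun t ht => by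
    have := J1fin t ht
    exact Measure.sub_add_cancel_of_le (le1 t ht)
  have ρ'G : ∀ t ∈ G, ρ' t = ρ t := fun t ht => by
    have := J1fin t (GI ht)
    simp only [ρ']
    rw [← goodeq t ht, Measure.add_sub_cancel]
  have incr : ∀ t₁ ∈ Icc a b, ∀ t₂ ∈ Icc a b, t₁ ≤ t₂ →
      ρ' t₂ + (JJ (Ioc t₁ t₂)).map Prod.fst = ρ' t₁ + (JJ (Ioc t₁ t₂)).map Prod.snd := by
    intro t₁ h₁ t₂ h₂ h12
    have hJ : JJ (Ioc a t₂) = JJ (Ioc a t₁) + JJ (Ioc t₁ t₂) := by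
      simp only [JJ]
      rw [← bind_add_left', ← Measure.restrict_union _ measurableSet_Ioc,
        Ioc_union_Ioc_eq_Ioc h₁.1 h12]
      exact Ioc_disjoint_Ioc_of_le le_rfl
    have e1 : J1 t₂ = J1 t₁ + (JJ (Ioc t₁ t₂)).map Prod.fst := by
      simp only [J1]; rw [hJ, Measure.map_add _ _ measurable_fst]
    have e2 : J2 t₂ = J2 t₁ + (JJ (Ioc t₁ t₂)).map Prod.snd := by
      simp only [J2]; rw [hJ, Measure.map_add _ _ measurable_snd]
    have := J1fin t₁ h₁
    have q1 := ρ'eq t₁ h₁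
    have q2 := ρ'eq t₂ h₂
    apply cancel_right' (τ := J1 t₁)
    calc _ = ρ' t₂ + J1 t₂ := by rw [e1]; abel
      _ = (ρa + J2 t₁) + (JJ (Ioc t₁ t₂)).map Prod.snd := by rw [q2, e2]; abel
      _ = _ := by rw [← q1]; abel
  have tv : ∀ t₁ ∈ Icc a b, ∀ t₂ ∈ Icc a b, t₁ ≤ t₂ →
      tvDist (ρ' t₂) (ρ' t₁) ≤ 2 * ω t₁ t₂ := by
    intro t₁ h₁ t₂ h₂ h12
    have e := incr t₁ h₁ t₂ h₂ h12
    have hω : ω t₁ t₂ = JJ (Ioc t₁ t₂) univ := by rw [JJu]; simp only [ω, uIoc_of_le h12]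
    have l1 : ρ' t₂ - ρ' t₁ ≤ (JJ (Ioc t₁ t₂)).map Prod.snd := by
      apply Measure.sub_le_of_le_add
      rw [add_comm, ← e]; exact Measure.le_add_right le_rfl
    have l2 : ρ' t₁ - ρ' t₂ ≤ (JJ (Ioc t₁ t₂)).map Prod.fst := by
      apply Measure.sub_le_of_le_add
      rw [add_comm, e]; exact Measure.le_add_right le_rfl
    have m1 := l1 univ
    have m2 := l2 univ
    rw [Measure.map_apply measurable_snd MeasurableSet.univ, preimage_univ, ← hω] at m1
    rw [Measure.map_apply measurable_fst MeasurableSet.univ, preimage_univ, ← hω] at m2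
    rw [two_mul]
    exact add_le_add m1 m2
  have tvc : ∀ t₀ ∈ Icc a b, Tendsto (fun t => tvDist (ρ' t) (ρ' t₀)) (𝓝[Icc a b] t₀) (𝓝 0) := by
    intro t₀ h₀
    have hl : Tendsto (fun s => 2 * ω s t₀) (𝓝[Icc a b] t₀) (𝓝 0) := by
      simpa [two_mul] using (ωlim t₀ h₀).add (ωlim t₀ h₀)
    refine tendsto_of_tendsto_of_tendsto_of_le_of_le' tendsto_const_nhds hl
      (Eventually.of_forall fun _ => zero_le) ?_
    filter_upwards [self_mem_nhdsWithin] with s hs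
    rcases le_total s t₀ with h | h
    · rw [tvDist_comm']; exact tv s hs t₀ h₀ h
    · rw [ωcomm]; exact tv t₀ h₀ s hs h
  refine ⟨ρ', fun t ht => (ρ'fin t ht).1, ?_, ?_, tvc, ?_, ?_⟩
  · rw [← Measure.restrict_congr_set Ioo_ae_eq_Icc, ae_restrict_iff' measurableSet_Ioo]
    filter_upwards [hgood] with t ht h2 using ρ'G t ⟨h2, ht h2⟩
  · intro t₁ h₁ t₂ h₂ h12
    refine (tv t₁ h₁ t₂ h₂ h12).trans_eq ?_
    simp only [ω]
    rw [uIoc_of_le h12, Measure.restrict_congr_set Ioc_ae_eq_Icc]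
  · intro φ hφ hb t₁ h₁ t₂ h₂ h12
    have hS : Ioc t₁ t₂ ⊆ Icc a b := fun x hx => ⟨h₁.1.trans hx.1.le, hx.2.trans h₂.2⟩
    rw [integral_Icc_eq_integral_Ioc, intJ _ hS φ hφ hb]
    have := JJfin _ hS
    have := ρ'fin t₁ h₁
    have := ρ'fin t₂ h₂
    obtain ⟨C, hC⟩ := hb
    have hi : ∀ m : Measure V, IsFiniteMeasure m → Integrable φ m := fun m _ =>
      Integrable.of_bound hφ.aestronglyMeasurable C (Eventually.of_forall hC)
    have e := congrArg (fun m : Measure V => ∫ x, φ x ∂m) (incr t₁ h₁ t₂ h₂ h12)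
    rw [integral_add_measure (hi _ inferInstance) (hi _ inferInstance),
      integral_add_measure (hi _ inferInstance) (hi _ inferInstance)] at e
    linarith
  · intro σ hσ σc t₀ h₀
    rw [← Measure.restrict_congr_set Ioo_ae_eq_Icc, ae_restrict_iff' measurableSet_Ioo] at hσ
    have hp : ∀ᵐ t ∂(volume : Measure ℝ), t ∈ Ioo a b → σ t = ρ' t := by
      filter_upwards [hgood, hσ] with t ht h2 h3
      rw [h2 h3, ρ'G t ⟨h3, ht h3⟩]
    have Dcl := dense_aux a b hab _ hp
    have DI : {t | t ∈ Ioo a b ∧ σ t = ρ' t} ⊆ Icc a b := fun t ht => Ioo_subset_Icc_self ht.1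
    have hl : Tendsto (fun s => tvDist (σ s) (σ t₀) + tvDist (ρ' s) (ρ' t₀)) (𝓝[Icc a b] t₀)
        (𝓝 0) := by
      simpa using (σc t₀ h₀).add (tvc t₀ h₀)
    have := ρ'fin t₀ h₀
    have g1 : σ t₀ ≤ ρ' t₀ := by
      refine Measure.le_iff.2 fun A hA => ?_
      refine le_of_limit _ a b t₀ DI (Dcl h₀) _ hl _ _ fun s hs => ?_
      have := ρ'fin s (DI hs)
      have : IsFiniteMeasure (σ s) := by rw [hs.2]; infer_instance
      have k1 := le_add_tv (σ t₀) (σ s) A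
      have k2 := le_add_tv (ρ' s) (ρ' t₀) A
      rw [tvDist_comm'] at k1
      calc σ t₀ A ≤ σ s A + tvDist (σ s) (σ t₀) := k1
        _ = ρ' s A + tvDist (σ s) (σ t₀) := by rw [hs.2]
        _ ≤ ρ' t₀ A + tvDist (ρ' s) (ρ' t₀) + tvDist (σ s) (σ t₀) := by gcongr
        _ = _ := by ring
    have : IsFiniteMeasure (σ t₀) := isFiniteMeasure_of_le _ g1
    refine le_antisymm g1 ?_
    refine Measure.le_iff.2 fun A hA => ?_
    refine le_of_limit _ a b t₀ DI (Dcl h₀) _ hl _ _ fun s hs => ?_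
    have := ρ'fin s (DI hs)
    have k1 := le_add_tv (ρ' t₀) (ρ' s) A
    have k2 := le_add_tv (σ s) (σ t₀) A
    rw [tvDist_comm'] at k1
    calc ρ' t₀ A ≤ ρ' s A + tvDist (ρ' s) (ρ' t₀) := k1
      _ = σ s A + tvDist (ρ' s) (ρ' t₀) := by rw [hs.2]
      _ ≤ σ t₀ A + tvDist (σ s) (σ t₀) + tvDist (ρ' s) (ρ' t₀) := by gcongr
      _ = _ := by ring
end

section
/- Let V be a measurable space, π a finite nonnegative measure on V, κ a bounded measurable kernel from V to itself with ‖κ_V‖_∞ := sup_x κ(x,V) < ∞, θ(dx dy) := π(dx)κ(x,dy), and assume detailed balance (θ symmetric under the swap (x,y) ↦ (y,x)). Let β: [0,∞) → [0,∞) be continuous, convex, and continuously differentiable on (0,∞), with β'(0) := lim_{r↓0} β'(r) ∈ [−∞,∞); define A_β(u,v) := β'(v) − β'(u) ∈ [−∞,+∞] for (u,v) ≠ (0,0) and A_β(0,0) := 0, and B_β(u,v,w) := A_β(u,v)·w ∈ [−∞,+∞] with the convention 0·(±∞) = 0. Let u: [a,b]×V → [0,∞) be jointly measurable with u_t π-integrable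 for every t ∈ [a,b], and let w: [a,b]×V×V → ℝ be measurable with ∫_a^b ∬_{V×V} |w_t| dθ dt < ∞; set w♭_t(x,y) := ½(w_t(x,y) − w_t(y,x)). Assume that for π-a.e. x ∈ V the map t ↦ u_t(x) is absolutely continuous on [a,b] with (d/dt) u_t(x) = ∫_V w♭_t(y,x) κ(x,dy) for a.e. t ∈ (a,b). If ∫_V β(u_a) dπ < ∞ and ∫_a^b ∬_{V×V} (B_β(u_t(x),u_t(y),w♭_t(x,y)))₊ θ(dx dy) dt < ∞, then the map (t,x,y) ↦ B_β(u_t(x),u_t(y),w♭_t(x,y)) is integrable with respect to dt⊗θ (in particular a.e. finite), the map t ↦ ∫_V β(u_t) dπ is absolutely continuous on [a,b], and for all a ≤ s ≤ t ≤ b: ∫_V β(u_t) dπ − ∫_V β(u_s) dπ = ½ ∫_s^t ∬_{V×V} B_β(u_r(x),u_r(y),w♭_r(x,y)) θ(dx dy) dr. -/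
open MeasureTheory ProbabilityTheory Filter Set
open scoped ENNReal

/-- The extension of the derivative `β'` to `r = 0` by its (extended-real) limit
`β'(0) = β'0`. -/
noncomputable def derExt (β' : ℝ → ℝ) (β'0 : EReal) (r : ℝ) : EReal :=
  if r = 0 then β'0 else (β' r : EReal)

/-- `A_β(u,v) = β'(v) − β'(u) ∈ [−∞,+∞]` for `(u,v) ≠ (0,0)`, and `A_β(0,0) = 0`. -/
noncomputable def Abeta (β' : ℝ → ℝ) (β'0 : EReal) (u v : ℝ) : EReal :=
  if u = 0 ∧ v = 0 then 0 else derExt β' β'0 v - derExt β' β'0 u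

/-- `B_β(u,v,w) = A_β(u,v)·w ∈ [−∞,+∞]`, with the convention `0·(±∞) = 0`
(built into the `EReal` multiplication). -/
noncomputable def Bbeta (β' : ℝ → ℝ) (β'0 : EReal) (u v w : ℝ) : EReal :=
  Abeta β' β'0 u v * (w : EReal)

/-- The positive part of an extended real, as an element of `[0,+∞]`. -/
noncomputable def erealPos (e : EReal) : ℝ≥0∞ :=
  if e = ⊤ then ⊤ else ENNReal.ofReal e.toReal

/-- The absolute value of an extended real, as an element of `[0,+∞]`. -/
noncomputable def erealAbs (e : EReal) : ℝ≥0∞ := erealPos e + erealPos (-e)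

lemma lip_of_deriv {G g : ℝ → ℝ} {C : ℝ} (hG : ∀ r, HasDerivAt G (g r) r)
    (hC : ∀ r, |g r| ≤ C) : LipschitzWith C.toNNReal G := by
  have hC0 : 0 ≤ C := (abs_nonneg _).trans (hC 0)
  apply lipschitzWith_of_nnnorm_deriv_le (fun r => (hG r).differentiableAt)
  intro r
  rw [(hG r).deriv, ← NNReal.coe_le_coe, Real.coe_toNNReal _ hC0]
  exact hC r

lemma ac_comp {G f : ℝ → ℝ} {a b : ℝ} {K : NNReal} (hG : LipschitzWith K G)
    (hf : AbsolutelyContinuousOnInterval f a b) :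
    AbsolutelyContinuousOnInterval (fun t => G (f t)) a b := by
  unfold AbsolutelyContinuousOnInterval at *
  have h2 := hf.const_mul (K : ℝ)
  rw [mul_zero] at h2
  refine squeeze_zero (fun E => Finset.sum_nonneg fun i _ => dist_nonneg) (fun E => ?_) h2
  rw [Finset.mul_sum]
  exact Finset.sum_le_sum fun i _ => hG.dist_le_mul _ _

lemma chain_one {G g f h : ℝ → ℝ} {C a b : ℝ} (hG : ∀ r, HasDerivAt G (g r) r)
    (hC : ∀ r, |g r| ≤ C) (hh : IntegrableOn h (Icc a b))
    (hf : ∀ t ∈ Icc a b, f t = f a + ∫ s in Icc a t, h s)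
    {s t : ℝ} (hs : s ∈ Icc a b) (ht : t ∈ Icc a b) (hst : s ≤ t) :
    G (f t) - G (f s) = ∫ r in Icc s t, g (f r) * h r := by
  have hab : a ≤ b := hs.1.trans hs.2
  have hhi : IntervalIntegrable h volume a b :=
    (intervalIntegrable_iff_integrableOn_Icc_of_le hab).2 hh
  set F : ℝ → ℝ := fun t => f a + ∫ v in a..t, h v with hF
  have hFf : ∀ t ∈ Icc a b, f t = F t := by
    intro t ht
    rw [hf t ht, hF]
    simp only
    rw [intervalIntegral.integral_of_le ht.1, integral_Icc_eq_integral_Ioc]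
  have hFac : AbsolutelyContinuousOnInterval F a b := by
    have h1 := hhi.absolutelyContinuousOnInterval_intervalIntegral (c := a) (by simp)
    have h0 : AbsolutelyContinuousOnInterval (fun _ : ℝ => f a) a b :=
      (LipschitzWith.const (f a)).lipschitzOnWith.absolutelyContinuousOnInterval
    exact h0.add h1
  have hsub : uIcc s t ⊆ uIcc a b := by
    rw [uIcc_of_le hst, uIcc_of_le hab]; exact Icc_subset_Icc hs.1 ht.2
  have hGF := (ac_comp (lip_of_deriv hG hC) hFac).mono hsub
  rw [hFf t ht, hFf s hs, ← hGF.integral_deriv_eq_sub, intervalIntegral.integral_of_le hst,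
    integral_Icc_eq_integral_Ioc]
  apply setIntegral_congr_ae measurableSet_Ioc
  filter_upwards [hhi.ae_hasDerivAt_integral] with r hr hr1
  have hrab : r ∈ Icc a b := ⟨hs.1.trans hr1.1.le, hr1.2.trans ht.2⟩
  have h3 := (hr (by rwa [uIcc_of_le hab]) a (by simp)).const_add (f a)
  rw [hFf r hrab]
  exact ((hG (F r)).comp r h3).deriv

lemma comp_integrable {V : Type*} [MeasurableSpace V]
    (π : Measure V) [IsFiniteMeasure π] {G g : ℝ → ℝ} {C : ℝ} (hG : ∀ r, HasDerivAt G (g r) r)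
    (hC : ∀ r, |g r| ≤ C) {f : V → ℝ} (hf : Integrable f π) :
    Integrable (fun x => G (f x)) π := by
  have hl := lip_of_deriv hG hC
  have h1 : Integrable (fun x => |G 0| + C.toNNReal * |f x|) π :=
    (integrable_const _).add (hf.abs.const_mul _)
  refine h1.mono' (hl.continuous.comp_aestronglyMeasurable hf.1) (Eventually.of_forall fun x => ?_)
  have h2 := hl.dist_le_mul (f x) 0
  rw [Real.dist_eq, Real.dist_eq, sub_zero] at h2
  rw [Real.norm_eq_abs]
  have := abs_sub_abs_le_abs_sub (G (f x)) (G 0)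
  linarith

lemma chain_two {V : Type*} [MeasurableSpace V]
    (π : Measure V) [IsFiniteMeasure π]
    (κ : Kernel V V) [IsFiniteKernel κ]
    (hdb : (π ⊗ₘ κ).map Prod.swap = π ⊗ₘ κ)
    {a b : ℝ} {u : ℝ → V → ℝ}
    (humeas : Measurable fun p : ℝ × V => u p.1 p.2)
    (huint : ∀ t ∈ Icc a b, Integrable (u t) π)
    {wb : ℝ × V × V → ℝ} (hwm : Measurable wb) (hanti : ∀ t x y, wb (t, y, x) = - wb (t, x, y))
    (hwi : Integrable wb ((volume.restrict (Icc a b)).prod (π ⊗ₘ κ)))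
    (hce : ∀ᵐ x ∂π, ∀ t ∈ Icc a b,
      u t x = u a x + ∫ s in Icc a t, ∫ y, wb (s, y, x) ∂(κ x))
    {G g : ℝ → ℝ} {C : ℝ} (hG : ∀ r, HasDerivAt G (g r) r) (hg : Continuous g)
    (hC : ∀ r, |g r| ≤ C) {s t : ℝ} (hs : s ∈ Icc a b) (ht : t ∈ Icc a b) (hst : s ≤ t) :
    ∫ x, G (u t x) ∂π - ∫ x, G (u s x) ∂π = (1 / 2) *
      ∫ z : ℝ × V × V, (g (u z.1 z.2.2) - g (u z.1 z.2.1)) * wb z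
        ∂((volume.restrict (Icc s t)).prod (π ⊗ₘ κ)) := by
  have hle : (volume.restrict (Icc s t)) ≤ (volume.restrict (Icc a b) : Measure ℝ) :=
    Measure.restrict_mono (Icc_subset_Icc hs.1 ht.2) le_rfl
  have hle2 : (volume.restrict (Icc s t)).prod (π ⊗ₘ κ) ≤
      (volume.restrict (Icc a b) : Measure ℝ).prod (π ⊗ₘ κ) :=
    Measure.prod_mono hle le_rfl
  set h : ℝ × V → ℝ := fun q => ∫ y, wb (q.1, y, q.2) ∂(κ q.2) with hh
  have hhm : StronglyMeasurable h := by
    have : StronglyMeasurable (fun z : (ℝ × V) × V => wb (z.1.1, z.2, z.1.2)) :=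
      (hwm.comp (by fun_prop)).stronglyMeasurable
    exact this.integral_kernel_prod_right' (κ := Kernel.comap κ Prod.snd measurable_snd)
  have hhi : Integrable h ((volume.restrict (Icc a b)).prod π) := by
    refine ⟨hhm.aestronglyMeasurable, ?_⟩
    have h1 := hwi.2
    unfold HasFiniteIntegral at h1 ⊢
    rw [lintegral_prod _ (by fun_prop)] at h1
    rw [lintegral_prod _ hhm.measurable.enorm.aemeasurable]
    refine lt_of_le_of_lt (lintegral_mono fun r => ?_) h1
    rw [Measure.lintegral_compProd (by fun_prop)]
    refine lintegral_mono fun x => ?_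
    refine (enorm_integral_le_lintegral_enorm _).trans (lintegral_mono fun y => ?_)
    rw [hanti, enorm_neg]
  have hgm : Measurable fun q : ℝ × V => g (u q.1 q.2) := hg.measurable.comp humeas
  have hghi : Integrable (fun q : ℝ × V => g (u q.1 q.2) * h q)
      ((volume.restrict (Icc s t)).prod π) := by
    refine (hhi.mono_measure (Measure.prod_mono hle le_rfl)).bdd_mul
      hgm.aestronglyMeasurable (c := C) (Eventually.of_forall fun q => hC _)
  have hae : ∀ᵐ x ∂π, IntegrableOn (fun r => h (r, x)) (Icc a b) := hhi.prod_left_ae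
  have e1 : ∀ᵐ x ∂π, G (u t x) - G (u s x) = ∫ r in Icc s t, g (u r x) * h (r, x) := by
    filter_upwards [hae, hce] with x hx1 hx2
    exact chain_one (f := fun t => u t x) hG hC hx1 hx2 hs ht hst
  rw [← integral_sub (comp_integrable π hG hC (huint t ht)) (comp_integrable π hG hC (huint s hs)),
    integral_congr_ae e1]
  have hBi : Integrable (fun z : ℝ × V × V => (g (u z.1 z.2.2) - g (u z.1 z.2.1)) * wb z)
      ((volume.restrict (Icc s t)).prod (π ⊗ₘ κ)) := by
    refine (hwi.mono_measure hle2).bdd_mul (c := C + C) ?_ (Eventually.of_forall fun q => ?_)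
    · apply Measurable.aestronglyMeasurable
      exact (hgm.comp (f := fun z : ℝ × V × V => (z.1, z.2.2)) (by fun_prop)).sub
        (hgm.comp (f := fun z : ℝ × V × V => (z.1, z.2.1)) (by fun_prop))
    · exact (abs_sub _ _).trans (add_le_add (hC _) (hC _))
  rw [integral_integral_swap (f := fun x r => g (u r x) * h (r, x)) hghi.swap,
    integral_prod _ hBi, ← integral_const_mul]
  apply integral_congr_ae
  filter_upwards [(hwi.mono_measure hle2).prod_right_ae] with r hr
  have hgr : ∀ f : V × V → V, Measurable f →
      Integrable (fun p : V × V => g (u r (f p)) * wb (r, p)) (π ⊗ₘ κ) := by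
    intro f hf
    refine hr.bdd_mul (c := C) ?_ (Eventually.of_forall fun q => hC _)
    exact (hgm.comp (f := fun p => (r, f p)) (by fun_prop)).aestronglyMeasurable
  have i1 := hgr Prod.fst measurable_fst
  have i2 := hgr Prod.snd measurable_snd
  have k1 : ∫ x, g (u r x) * h (r, x) ∂π = - ∫ p : V × V, g (u r p.1) * wb (r, p) ∂(π ⊗ₘ κ) := by
    rw [Measure.integral_compProd i1, ← integral_neg]
    refine integral_congr_ae (Eventually.of_forall fun x => ?_)
    simp only [hh]
    rw [← integral_const_mul, ← integral_neg]
    refine integral_congr_ae (Eventually.of_forall fun y => ?_)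
    simp only
    rw [hanti]; ring
  have k2 : ∫ p : V × V, g (u r p.2) * wb (r, p) ∂(π ⊗ₘ κ)
      = - ∫ p : V × V, g (u r p.1) * wb (r, p) ∂(π ⊗ₘ κ) := by
    conv_lhs => rw [← hdb]
    rw [integral_map measurable_swap.aemeasurable (by rw [hdb]; exact i2.1), ← integral_neg]
    refine integral_congr_ae (Eventually.of_forall fun p => ?_)
    obtain ⟨x, y⟩ := p
    simp only [Prod.swap_prod_mk]
    rw [hanti]; ring
  have k3 : ∫ p : V × V, (g (u r p.2) - g (u r p.1)) * wb (r, p) ∂(π ⊗ₘ κ)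
      = ∫ p : V × V, g (u r p.2) * wb (r, p) ∂(π ⊗ₘ κ)
        - ∫ p : V × V, g (u r p.1) * wb (r, p) ∂(π ⊗ₘ κ) := by
    rw [← integral_sub i2 i1]
    simp only [sub_mul]
  rw [k1, k3, k2]; ring

/-- truncation of an extended real to `[-c, c]` -/
noncomputable def cl (c : ℝ) (e : EReal) : ℝ := (max ((-c : ℝ) : EReal) (min (c : EReal) e)).toReal

lemma cl_coe (c x : ℝ) : cl c (x : EReal) = max (-c) (min c x) := by
  unfold cl
  have : max ((-c : ℝ) : EReal) (min (c : EReal) x) = ((max (-c) (min c x) : ℝ) : EReal) := by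
    rw [EReal.coe_strictMono.monotone.map_max, EReal.coe_strictMono.monotone.map_min]
  rw [this, EReal.toReal_coe]

lemma cl_bot (c : ℝ) : cl c ⊥ = -c := by
  unfold cl
  simp

lemma cl_cont (c : ℝ) : Continuous (cl c) := by
  rw [continuous_iff_continuousAt]
  intro e
  have h1 : ContinuousAt (fun e : EReal => max ((-c : ℝ) : EReal) (min (c : EReal) e)) e :=
    (continuous_const.max (continuous_const.min continuous_id)).continuousAt
  refine ContinuousAt.comp (g := EReal.toReal) ?_ h1
  apply EReal.tendsto_toReal
  · apply ne_of_lt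
    simp only [max_lt_iff, min_lt_iff]
    exact ⟨EReal.coe_lt_top _, Or.inl (EReal.coe_lt_top _)⟩
  · apply ne_of_gt
    exact lt_max_of_lt_left (EReal.bot_lt_coe _)

lemma cl_abs {c : ℝ} (hc : 0 ≤ c) {e : EReal} (he : e ≠ ⊤) : |cl c e| ≤ c := by
  induction e with
  | bot => rw [cl_bot, abs_neg, abs_of_nonneg hc]
  | top => exact absurd rfl he
  | coe x =>
    rw [cl_coe, abs_le]
    exact ⟨le_max_left _ _, max_le (by linarith) (min_le_left _ _)⟩

/-- the difference `y - x`, with `0` on the diagonal -/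
noncomputable def dif (x y : EReal) : EReal := if x = y then 0 else y - x

lemma erealPos_coe (x : ℝ) : erealPos (x : EReal) = ENNReal.ofReal x := by
  unfold erealPos; simp

lemma erealPos_top : erealPos ⊤ = ⊤ := by
  unfold erealPos; simp

lemma erealPos_bot : erealPos ⊥ = 0 := by
  unfold erealPos; simp

lemma dif_swap (x y : EReal) (hx : x ≠ ⊤) (hy : y ≠ ⊤) : dif y x = - dif x y := by
  unfold dif
  by_cases h : x = y
  · simp [h]
  · rw [if_neg h, if_neg (Ne.symm h)]
    rw [EReal.neg_sub (by by_contra! hh; exact h (hh.2.trans hh.1.symm)) (by tauto), add_comm, sub_eq_add_neg]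

lemma cl_real (c : ℝ) (hc : 0 ≤ c) (x y : ℝ) :
    ∃ k : ℝ, 0 ≤ k ∧ k ≤ 1 ∧ cl c y - cl c x = k * (y - x) := by
  rw [cl_coe, cl_coe]
  have key : ∀ x y : ℝ, x ≤ y → 0 ≤ max (-c) (min c y) - max (-c) (min c x) ∧
      max (-c) (min c y) - max (-c) (min c x) ≤ y - x := by
    intro x y h
    constructor
    · have := max_le_max_left (-c) (min_le_min_left c h)
      linarith
    · grind
  rcases lt_trichotomy x y with h | h | h
  · have hp : 0 < y - x := by linarith
    obtain ⟨h1, h2⟩ := key x y h.le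
    refine ⟨_ / (y - x), div_nonneg h1 hp.le, (div_le_one hp).2 h2, ?_⟩
    field_simp
  · exact ⟨0, le_rfl, zero_le_one, by simp [h]⟩
  · have hp : 0 < x - y := by linarith
    obtain ⟨h1, h2⟩ := key y x h.le
    refine ⟨_ / (x - y), div_nonneg h1 hp.le, (div_le_one hp).2 h2, ?_⟩
    field_simp
    ring

lemma pt_aux (x : ℝ) (y : EReal) (hy : y ≠ ⊤) (w : ℝ) (c0 : ℝ) (h0 : 0 ≤ c0) :
    (∀ n : ℕ, ENNReal.ofReal ((cl (n + c0) y - cl (n + c0) x) * w) ≤ erealPos (dif x y * w)) ∧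
    Tendsto (fun n : ℕ => ENNReal.ofReal ((cl (n + c0) y - cl (n + c0) x) * w)) atTop
      (nhds (erealPos (dif x y * w))) := by
  have hnn : ∀ n : ℕ, (0 : ℝ) ≤ n + c0 := fun n => by positivity
  induction y with
  | top => exact absurd rfl hy
  | coe y =>
    have hd : dif x y * w = (((y - x) * w : ℝ) : EReal) := by
      unfold dif
      split_ifs with h
      · rw [EReal.coe_eq_coe_iff] at h; simp [h]
      · norm_cast
    rw [hd, erealPos_coe]
    constructor
    · intro n
      obtain ⟨k, hk0, hk1, hk⟩ := cl_real (n + c0) (hnn n) x y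
      rw [hk, mul_assoc, ENNReal.ofReal_mul hk0]
      exact mul_le_of_le_one_left zero_le (by simpa using hk1)
    · apply tendsto_const_nhds.congr'
      obtain ⟨N, hN⟩ := exists_nat_ge (max |x| |y|)
      filter_upwards [eventually_ge_atTop N] with n hn
      have hn' : (N : ℝ) ≤ n := by exact_mod_cast hn
      have hx : |x| ≤ n := (le_max_left _ _).trans (hN.trans hn')
      have hy : |y| ≤ n := (le_max_right _ _).trans (hN.trans hn')
      rw [abs_le] at hx hy
      rw [cl_coe, cl_coe, min_eq_right (by linarith), min_eq_right (by linarith),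
        max_eq_right (by linarith), max_eq_right (by linarith)]
  | bot =>
    have hd : dif x ⊥ = ⊥ := by
      unfold dif
      rw [if_neg (EReal.coe_ne_bot x)]
      exact EReal.bot_sub _
    rw [hd]
    have hle : ∀ n : ℕ, cl (n + c0) ⊥ - cl (n + c0) x ≤ 0 := by
      intro n
      rw [cl_bot, cl_coe]
      have := le_max_left (-(n + c0)) (min (n + c0) x)
      linarith
    rcases lt_trichotomy w 0 with h | h | h
    · rw [EReal.bot_mul_coe_of_neg h, erealPos_top]
      refine ⟨fun n => le_top, ?_⟩
      apply ENNReal.tendsto_ofReal_atTop.comp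
      have h1 : Tendsto (fun n : ℕ => ((n : ℝ) - |x|) * (-w)) atTop atTop :=
        (tendsto_atTop_add_const_right _ _ tendsto_natCast_atTop_atTop).atTop_mul_const
          (by linarith)
      refine tendsto_atTop_mono (fun n => ?_) h1
      have : cl (n + c0) ⊥ - cl (n + c0) x ≤ -(n - |x|) := by
        rw [cl_bot, cl_coe]
        have h2 : -|x| ≤ max (-(n + c0)) (min (n + c0) x) := by
          apply le_max_of_le_right
          exact le_min (by have := abs_nonneg x; have := hnn n; linarith) (neg_abs_le x)
        linarith
      nlinarith
    · subst h
      simp [erealPos]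
    · rw [EReal.bot_mul_coe_of_pos h, erealPos_bot]
      have : ∀ n : ℕ, ENNReal.ofReal ((cl (n + c0) ⊥ - cl (n + c0) x) * w) = 0 := by
        intro n
        rw [ENNReal.ofReal_eq_zero]
        exact mul_nonpos_of_nonpos_of_nonneg (hle n) h.le
      simp [this]

lemma pt_pos (x y : EReal) (hx : x ≠ ⊤) (hy : y ≠ ⊤) (w : ℝ) (c0 : ℝ) (h0 : 0 ≤ c0) :
    (∀ n : ℕ, ENNReal.ofReal ((cl (n + c0) y - cl (n + c0) x) * w) ≤ erealPos (dif x y * w)) ∧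
    Tendsto (fun n : ℕ => ENNReal.ofReal ((cl (n + c0) y - cl (n + c0) x) * w)) atTop
      (nhds (erealPos (dif x y * w))) := by
  by_cases hxb : x = ⊥
  · by_cases hyb : y = ⊥
    · subst hxb; subst hyb
      simp [dif, erealPos]
    · have h := pt_aux y.toReal x hx (-w) c0 h0
      rw [EReal.coe_toReal hy hyb, dif_swap x y hx hy, EReal.coe_neg, neg_mul, mul_neg,
        neg_neg] at h
      have e : ∀ n : ℕ, (cl (n + c0) y - cl (n + c0) x) * w =
        (cl (n + c0) x - cl (n + c0) y) * (-w) := fun n => by ring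
      simp only [e]
      exact h
  · have h := pt_aux x.toReal y hy w c0 h0
    rwa [EReal.coe_toReal hx hxb] at h

lemma pt_neg (x y : EReal) (hx : x ≠ ⊤) (hy : y ≠ ⊤) (w : ℝ) (c0 : ℝ) (h0 : 0 ≤ c0) :
    (∀ n : ℕ, ENNReal.ofReal (-((cl (n + c0) y - cl (n + c0) x) * w)) ≤
      erealPos (-(dif x y * w))) ∧
    Tendsto (fun n : ℕ => ENNReal.ofReal (-((cl (n + c0) y - cl (n + c0) x) * w))) atTop
      (nhds (erealPos (-(dif x y * w)))) := by
  have h := pt_pos x y hx hy (-w) c0 h0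
  rw [EReal.coe_neg, mul_neg] at h
  simpa only [mul_neg] using h

lemma toReal_eq_pos_sub (e : EReal) (h1 : erealPos e ≠ ⊤) (h2 : erealPos (-e) ≠ ⊤) :
    e.toReal = (erealPos e).toReal - (erealPos (-e)).toReal := by
  induction e with
  | bot => simp [erealPos] at h2
  | top => simp [erealPos] at h1
  | coe x =>
    rw [← EReal.coe_neg, erealPos_coe, erealPos_coe, ENNReal.toReal_ofReal', ENNReal.toReal_ofReal',
      EReal.toReal_coe]
    grind

/-- continuous extension of the derivative to the whole line -/
noncomputable def Dx (β' : ℝ → ℝ) (β'0 : EReal) (r : ℝ) : EReal :=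
  if r ≤ 0 then β'0 else (β' r : EReal)

lemma Dx_ne_top (β' : ℝ → ℝ) (β'0 : EReal) (h : β'0 ≠ ⊤) (r : ℝ) : Dx β' β'0 r ≠ ⊤ := by
  unfold Dx; split_ifs
  · exact h
  · exact EReal.coe_ne_top _

lemma Dx_cont {β' : ℝ → ℝ} {β'0 : EReal} (hβ'cont : ContinuousOn β' (Ioi 0))
    (hβ'lim : Tendsto (fun r : ℝ => (β' r : EReal)) (nhdsWithin 0 (Ioi 0))
      (nhds β'0)) : Continuous (Dx β' β'0) := by
  rw [continuous_iff_continuousAt]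
  intro r
  rcases lt_trichotomy r 0 with h | h | h
  · have : (fun _ : ℝ => β'0) =ᶠ[nhds r] Dx β' β'0 := by
      filter_upwards [Iio_mem_nhds h] with s hs
      unfold Dx; rw [if_pos (le_of_lt hs)]
    exact continuousAt_const.congr this
  · subst h
    rw [continuousAt_iff_continuous_left'_right']
    have h0 : Dx β' β'0 0 = β'0 := by unfold Dx; simp
    constructor
    · unfold ContinuousWithinAt
      rw [h0]
      apply tendsto_const_nhds.congr'
      filter_upwards [self_mem_nhdsWithin] with s hs
      unfold Dx; rw [if_pos (le_of_lt hs)]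
    · unfold ContinuousWithinAt
      rw [h0]
      apply hβ'lim.congr'
      filter_upwards [self_mem_nhdsWithin] with s hs
      unfold Dx; rw [if_neg (not_le.2 hs)]
  · have : (fun r : ℝ => (β' r : EReal)) =ᶠ[nhds r] Dx β' β'0 := by
      filter_upwards [Ioi_mem_nhds h] with s hs
      unfold Dx; rw [if_neg (not_le.2 hs)]
    refine ContinuousAt.congr ?_ this
    exact continuous_coe_real_ereal.continuousAt.comp (hβ'cont.continuousAt (Ioi_mem_nhds h))

lemma Abeta_eq (β' : ℝ → ℝ) (β'0 : EReal) {u v : ℝ} (hu : 0 ≤ u) (hv : 0 ≤ v) (h : β'0 ≠ ⊤) :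
    Abeta β' β'0 u v = dif (Dx β' β'0 u) (Dx β' β'0 v) := by
  have hD : ∀ r : ℝ, 0 ≤ r → derExt β' β'0 r = Dx β' β'0 r := by
    intro r hr
    unfold derExt Dx
    by_cases h0 : r = 0
    · simp [h0]
    · rw [if_neg h0, if_neg (not_le.2 (lt_of_le_of_ne hr (Ne.symm h0)))]
  unfold Abeta dif
  rw [hD u hu, hD v hv]
  by_cases h1 : u = 0 ∧ v = 0
  · rw [if_pos h1, if_pos (by rw [h1.1, h1.2])]
  · rw [if_neg h1]
    split_ifs with h2
    · rw [h2]
      apply EReal.sub_self (Dx_ne_top _ _ h _)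
      by_cases hv0 : v = 0
      · have hu0 : u ≠ 0 := fun h => h1 ⟨h, hv0⟩
        rw [← h2]
        unfold Dx
        rw [if_neg (not_le.2 (lt_of_le_of_ne hu (Ne.symm hu0)))]
        exact EReal.coe_ne_bot _
      · unfold Dx
        rw [if_neg (not_le.2 (lt_of_le_of_ne hv (Ne.symm hv0)))]
        exact EReal.coe_ne_bot _
    · rfl

lemma beta_facts {β β' : ℝ → ℝ} {β'0 : EReal} 
    (hβcont : ContinuousOn β (Ici 0))
    (hβconv : ConvexOn ℝ (Ici 0) β)
    (hβderiv : ∀ r : ℝ, 0 < r → HasDerivAt β (β' r) r)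
    (hβ'cont : ContinuousOn β' (Ioi 0))
    (hβ'lim : Tendsto (fun r : ℝ => (β' r : EReal)) (nhdsWithin 0 (Ioi 0))
      (nhds β'0)) {r : ℝ} (hr : 0 ≤ r) :
    (∀ n : ℕ, β 1 + β' 1 * (r - 1) ≤
      β 1 + ∫ s in (1 : ℝ)..r, cl (n + |β' 1|) (Dx β' β'0 s)) ∧
    (∀ n : ℕ, β 1 + ∫ s in (1 : ℝ)..r, cl (n + |β' 1|) (Dx β' β'0 s) ≤ β r) ∧
    Tendsto (fun n : ℕ => β 1 + ∫ s in (1 : ℝ)..r, cl (n + |β' 1|) (Dx β' β'0 s)) atTop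
      (nhds (β r)) := by
  have hmono : ∀ s t : ℝ, 0 < s → s ≤ t → β' s ≤ β' t := by
    intro s t hs hst
    rcases hst.eq_or_lt with h | hst
    · rw [h]
    · have ht := hs.trans hst
      exact (hβconv.le_slope_of_hasDerivAt hs.le ht.le hst (hβderiv s hs)).trans
        (hβconv.slope_le_of_hasDerivAt hs.le ht.le hst (hβderiv t ht))
  have hgc : ∀ n : ℕ, Continuous fun s => cl (n + |β' 1|) (Dx β' β'0 s) := fun n =>
    (cl_cont _).comp (Dx_cont hβ'cont hβ'lim)
  have hg : ∀ (n : ℕ) (s : ℝ), 0 < s → cl (n + |β' 1|) (Dx β' β'0 s) =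
      max (-(n + |β' 1|)) (min (n + |β' 1|) (β' s)) := by
    intro n s hs
    unfold Dx
    rw [if_neg (not_le.2 hs), cl_coe]
  have hn0 : ∀ n : ℕ, (0 : ℝ) ≤ n := fun n => by positivity
  have h1a := neg_abs_le (β' 1)
  have h1b := le_abs_self (β' 1)
  have hup : ∀ (n : ℕ) (s : ℝ), 1 ≤ s → β' 1 ≤ cl (n + |β' 1|) (Dx β' β'0 s) ∧
      cl (n + |β' 1|) (Dx β' β'0 s) ≤ β' s := by
    intro n s hs
    have h2 := hmono 1 s one_pos hs
    have h3 := hn0 n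
    rw [hg n s (by linarith)]
    exact ⟨le_max_of_le_right (le_min (by linarith) h2), max_le (by linarith) (min_le_right _ _)⟩
  have hdn : ∀ (n : ℕ) (s : ℝ), 0 < s → s ≤ 1 → β' s ≤ cl (n + |β' 1|) (Dx β' β'0 s) ∧
      cl (n + |β' 1|) (Dx β' β'0 s) ≤ β' 1 := by
    intro n s hs0 hs
    have h2 := hmono s 1 hs0 hs
    have h3 := hn0 n
    rw [hg n s hs0]
    exact ⟨le_max_of_le_right (le_min (by linarith) le_rfl),
      max_le (by linarith) ((min_le_right _ _).trans h2)⟩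
  have hsub : uIcc 1 r ⊆ Ici 0 := fun s hs => le_trans (le_min zero_le_one hr) hs.1
  have hint : IntervalIntegrable β' volume 1 r := by
    rcases le_total 1 r with h | h
    · apply ContinuousOn.intervalIntegrable
      apply hβ'cont.mono
      rw [uIcc_of_le h]
      exact fun s hs => lt_of_lt_of_le one_pos hs.1
    · have h4 : IntegrableOn (fun s => β' 1 - β' s) (Ioc r 1) := by
        apply intervalIntegral.integrableOn_deriv_right_of_nonneg
          (g := fun s => β' 1 * s - β s)
        · refine (continuousOn_const.mul continuousOn_id).sub (hβcont.mono ?_)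
          exact fun s hs => hr.trans hs.1
        · intro s hs
          have := ((hasDerivAt_id s).const_mul (β' 1)).sub (hβderiv s (hr.trans_lt hs.1))
          simp only [mul_one] at this
          exact this.hasDerivWithinAt
        · intro s hs
          have := hmono s 1 (hr.trans_lt hs.1) hs.2.le
          linarith
      have h5 : IntervalIntegrable (fun s => β' 1 - β' s) volume r 1 :=
        (intervalIntegrable_iff_integrableOn_Ioc_of_le h).2 h4
      have h6 := (intervalIntegrable_const (c := β' 1) (μ := volume) (a := r) (b := 1)).sub h5
      have h7 : (fun s => β' s) = (fun s => β' 1 - (β' 1 - β' s)) := by ext s; ring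
      apply IntervalIntegrable.symm
      rw [show β' = (fun s => β' 1 - (β' 1 - β' s)) by ext s; ring]
      exact h6
  have hftc : ∫ s in (1:ℝ)..r, β' s = β r - β 1 := by
    apply intervalIntegral.integral_eq_sub_of_hasDeriv_right (hβcont.mono hsub) _ hint
    intro s hs
    exact (hβderiv s (lt_of_le_of_lt (le_min zero_le_one hr) hs.1)).hasDerivWithinAt
  have hgi : ∀ (n : ℕ) (x y : ℝ),
      IntervalIntegrable (fun s => cl (n + |β' 1|) (Dx β' β'0 s)) volume x y :=
    fun n x y => (hgc n).intervalIntegrable _ _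
  have hci : ∀ (x y : ℝ), IntervalIntegrable (fun _ => β' 1) volume x y :=
    fun x y => intervalIntegrable_const
  have hconst : ∫ s in (1:ℝ)..r, β' 1 = β' 1 * (r - 1) := by
    rw [intervalIntegral.integral_const, smul_eq_mul, mul_comm]
  refine ⟨fun n => ?_, fun n => ?_, ?_⟩
  · rw [← hconst]
    apply add_le_add_right
    rcases le_total 1 r with h | h
    · exact intervalIntegral.integral_mono_on h (hci _ _) (hgi n _ _) fun s hs => (hup n s hs.1).1
    · rw [intervalIntegral.integral_symm, intervalIntegral.integral_symm r 1, neg_le_neg_iff]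
      exact intervalIntegral.integral_mono_on_of_le_Ioo h (hgi n _ _) (hci _ _)
        fun s hs => (hdn n s (hr.trans_lt hs.1) hs.2.le).2
  · rw [show β r = β 1 + ∫ s in (1:ℝ)..r, β' s by rw [hftc]; ring]
    apply add_le_add_right
    rcases le_total 1 r with h | h
    · exact intervalIntegral.integral_mono_on h (hgi n _ _) hint fun s hs => (hup n s hs.1).2
    · rw [intervalIntegral.integral_symm, intervalIntegral.integral_symm r 1, neg_le_neg_iff]
      exact intervalIntegral.integral_mono_on_of_le_Ioo h hint.symm (hgi n _ _)
        fun s hs => (hdn n s (hr.trans_lt hs.1) hs.2.le).1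
  · rw [show β r = β 1 + ∫ s in (1:ℝ)..r, β' s by rw [hftc]; ring]
    apply Tendsto.const_add
    apply intervalIntegral.tendsto_integral_filter_of_dominated_convergence
      (fun s => |β' s|)
    · exact Eventually.of_forall fun n => (hgc n).aestronglyMeasurable
    · refine Eventually.of_forall fun n => Eventually.of_forall fun s hs => ?_
      have hs0 : 0 < s := lt_of_le_of_lt (le_min zero_le_one hr) hs.1
      have h3 := hn0 n
      rw [hg n s hs0, Real.norm_eq_abs]
      have := abs_nonneg (β' 1)
      grind
    · exact hint.abs
    · refine Eventually.of_forall fun s hs => ?_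
      have hs0 : 0 < s := lt_of_le_of_lt (le_min zero_le_one hr) hs.1
      apply tendsto_const_nhds.congr'
      obtain ⟨N, hN⟩ := exists_nat_ge |β' s|
      filter_upwards [eventually_ge_atTop N] with n hn
      have hn' : (N : ℝ) ≤ n := by exact_mod_cast hn
      have := abs_le.1 (hN.trans hn')
      have := abs_nonneg (β' 1)
      rw [hg n s hs0, min_eq_right (by linarith), max_eq_right (by linarith)]

lemma neg_finite {Z : Type*} [MeasurableSpace Z] {m : Measure Z} {bn : ℕ → Z → ℝ}
    {P N : Z → ℝ≥0∞} (hbm : ∀ n, Measurable (bn n)) (hbi : ∀ n, Integrable (bn n) m)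
    (hP : ∀ n z, ENNReal.ofReal (bn n z) ≤ P z)
    (hNt : ∀ z, Tendsto (fun n => ENNReal.ofReal (-bn n z)) atTop (nhds (N z)))
    (hPf : ∫⁻ z, P z ∂m < ⊤) {K : ℝ} (hK : ∀ n, K ≤ ∫ z, bn n z ∂m) : ∫⁻ z, N z ∂m < ⊤ := by
  have h1 : ∀ n, ∫⁻ z, ENNReal.ofReal (-bn n z) ∂m ≤
      ENNReal.ofReal ((∫⁻ z, P z ∂m).toReal - K) := by
    intro n
    have h2 := hK n
    rw [integral_eq_lintegral_pos_part_sub_lintegral_neg_part (hbi n)] at h2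
    have h3 : (∫⁻ z, ENNReal.ofReal (bn n z) ∂m).toReal ≤ (∫⁻ z, P z ∂m).toReal :=
      ENNReal.toReal_mono hPf.ne (lintegral_mono fun z => hP n z)
    have h4 : ∫⁻ z, ENNReal.ofReal (-bn n z) ∂m ≠ ⊤ := by
      have h5 := (hbi n).neg.2
      refine ne_top_of_le_ne_top h5.ne (lintegral_mono fun z => ?_)
      exact Real.ofReal_le_enorm _
    rw [← ENNReal.ofReal_toReal h4]
    exact ENNReal.ofReal_le_ofReal (by linarith)
  have h6 : ∫⁻ z, N z ∂m ≤ liminf (fun n => ∫⁻ z, ENNReal.ofReal (-bn n z) ∂m) atTop := by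
    have := lintegral_liminf_le (u := atTop) (μ := m) (f := fun n z => ENNReal.ofReal (-bn n z))
      (fun n => (hbm n).neg.ennreal_ofReal)
    refine le_trans (lintegral_mono fun z => ?_) this
    exact (hNt z).liminf_eq.ge
  refine lt_of_le_of_lt h6 (lt_of_le_of_lt ?_ (ENNReal.ofReal_lt_top (r := (∫⁻ z, P z ∂m).toReal - K)))
  exact (liminf_le_liminf (Eventually.of_forall h1)).trans (by simp)

lemma dct {Z : Type*} [MeasurableSpace Z] {m : Measure Z} {bn : ℕ → Z → ℝ}
    {P N : Z → ℝ≥0∞} (hbm : ∀ n, Measurable (bn n))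
    (hPm : Measurable P) (hNm : Measurable N)
    (hP : ∀ n z, ENNReal.ofReal (bn n z) ≤ P z)
    (hN : ∀ n z, ENNReal.ofReal (-bn n z) ≤ N z)
    (hPt : ∀ z, Tendsto (fun n => ENNReal.ofReal (bn n z)) atTop (nhds (P z)))
    (hNt : ∀ z, Tendsto (fun n => ENNReal.ofReal (-bn n z)) atTop (nhds (N z)))
    (hPf : ∫⁻ z, P z ∂m < ⊤) (hNf : ∫⁻ z, N z ∂m < ⊤) :
    Tendsto (fun n => ∫ z, bn n z ∂m) atTop (nhds (∫ z, ((P z).toReal - (N z).toReal) ∂m)) := by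
  have hPi : Integrable (fun z => (P z).toReal) m :=
    integrable_toReal_of_lintegral_ne_top hPm.aemeasurable hPf.ne
  have hNi : Integrable (fun z => (N z).toReal) m :=
    integrable_toReal_of_lintegral_ne_top hNm.aemeasurable hNf.ne
  have hsplit : ∀ x : ℝ, x = (ENNReal.ofReal x).toReal - (ENNReal.ofReal (-x)).toReal := by
    intro x
    rw [ENNReal.toReal_ofReal', ENNReal.toReal_ofReal']
    grind
  have aP := ae_lt_top hPm hPf.ne
  have aN := ae_lt_top hNm hNf.ne
  refine tendsto_integral_of_dominated_convergence (fun z => (P z).toReal + (N z).toReal)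
    (fun n => (hbm n).aestronglyMeasurable) (hPi.add hNi) (fun n => ?_) ?_
  · filter_upwards [aP, aN] with z h1 h2
    have h3 := ENNReal.toReal_mono h1.ne (hP n z)
    have h4 := ENNReal.toReal_mono h2.ne (hN n z)
    rw [ENNReal.toReal_ofReal'] at h3 h4
    rw [Real.norm_eq_abs]
    grind
  · filter_upwards [aP, aN] with z h1 h2
    have h3 := (ENNReal.tendsto_toReal h1.ne).comp (hPt z)
    have h4 := (ENNReal.tendsto_toReal h2.ne).comp (hNt z)
    refine (h3.sub h4).congr fun n => ?_
    exact (hsplit _).symm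

lemma beta_int {V : Type*} [MeasurableSpace V] {π : Measure V} {Gn : ℕ → V → ℝ} {L B : V → ℝ}
    (hG : ∀ n, Integrable (Gn n) π) (hL : Integrable L π) (hLG : ∀ n x, L x ≤ Gn n x)
    (ht : ∀ x, Tendsto (fun n => Gn n x) atTop (nhds (B x))) {M : ℝ}
    (hM : ∀ n, ∫ x, Gn n x ∂π ≤ M) : Integrable B π := by
  have hBm : AEStronglyMeasurable B π :=
    aestronglyMeasurable_of_tendsto_ae atTop (fun n => (hG n).1) (Eventually.of_forall ht)
  have hLB : ∀ x, L x ≤ B x := fun x => ge_of_tendsto' (ht x) fun n => hLG n x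
  have h1 : ∀ n, ∫⁻ x, ENNReal.ofReal (Gn n x - L x) ∂π ≤ ENNReal.ofReal (M - ∫ x, L x ∂π) := by
    intro n
    rw [← ofReal_integral_eq_lintegral_ofReal (f := fun x => Gn n x - L x) ((hG n).sub hL)
      (Eventually.of_forall fun x => sub_nonneg.2 (hLG n x)), integral_sub (hG n) hL]
    exact ENNReal.ofReal_le_ofReal (by linarith [hM n])
  have h2 : ∫⁻ x, ENNReal.ofReal (B x - L x) ∂π ≤
      liminf (fun n => ∫⁻ x, ENNReal.ofReal (Gn n x - L x) ∂π) atTop := by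
    have := lintegral_liminf_le' (u := atTop) (μ := π) (f := fun n x => ENNReal.ofReal (Gn n x - L x))
      (fun n => ((hG n).sub hL).1.aemeasurable.ennreal_ofReal)
    refine le_trans (lintegral_mono fun x => ?_) this
    exact (ENNReal.tendsto_ofReal ((ht x).sub_const (L x))).liminf_eq.ge
  have h3 : ∫⁻ x, ENNReal.ofReal (B x - L x) ∂π < ⊤ := by
    refine lt_of_le_of_lt h2 (lt_of_le_of_lt ?_ (ENNReal.ofReal_lt_top (r := M - ∫ x, L x ∂π)))
    exact (liminf_le_liminf (Eventually.of_forall h1)).trans (by simp)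
  have h4 : Integrable (fun x => B x - L x) π := by
    refine ⟨hBm.sub hL.1, ?_⟩
    rw [hasFiniteIntegral_iff_ofReal (Eventually.of_forall fun x => sub_nonneg.2 (hLB x))]
    exact h3
  have := h4.add hL
  refine this.congr (Eventually.of_forall fun x => ?_)
  simp

/-- Chain rule I: along a solution of the continuity equation with integrable flux
density `w`, if `∫ β(u_a) dπ < ∞` and the positive part of
`B_β(u_t(x),u_t(y),w♭_t(x,y))` is `dt⊗θ`-integrable, then `B_β(u,u,w♭)` is
`dt⊗θ`-integrable, `t ↦ ∫ β(u_t) dπ` is absolutely continuous, and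
`∫β(u_t)dπ − ∫β(u_s)dπ = ½∫_s^t ∬ B_β dθ dr`. -/
theorem chain_rule_I
    {V : Type*} [MeasurableSpace V]
    (π : Measure V) [IsFiniteMeasure π]
    (κ : Kernel V V) [IsFiniteKernel κ]
    (hdb : (π ⊗ₘ κ).map Prod.swap = π ⊗ₘ κ)
    (β β' : ℝ → ℝ) (β'0 : EReal) (hβ'0top : β'0 ≠ ⊤)
    (hβcont : ContinuousOn β (Ici 0))
    (hβconv : ConvexOn ℝ (Ici 0) β)
    (hβnonneg : ∀ r : ℝ, 0 ≤ r → 0 ≤ β r)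
    (hβderiv : ∀ r : ℝ, 0 < r → HasDerivAt β (β' r) r)
    (hβ'cont : ContinuousOn β' (Ioi 0))
    (hβ'lim : Tendsto (fun r : ℝ => (β' r : EReal)) (nhdsWithin 0 (Ioi 0))
      (nhds β'0))
    (a b : ℝ) (hab : a ≤ b)
    (u : ℝ → V → ℝ)
    (humeas : Measurable fun p : ℝ × V => u p.1 p.2)
    (hunonneg : ∀ t ∈ Icc a b, ∀ x : V, 0 ≤ u t x)
    (huint : ∀ t ∈ Icc a b, Integrable (u t) π)
    (w : ℝ → V → V → ℝ)
    (hwmeas : Measurable fun p : ℝ × V × V => w p.1 p.2.1 p.2.2)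
    (hwint : ∫⁻ t in Icc a b,
      ∫⁻ p : V × V, ENNReal.ofReal |w t p.1 p.2| ∂(π ⊗ₘ κ) < ⊤)
    (hce : ∀ᵐ x ∂π, ∀ t ∈ Icc a b,
      u t x = u a x + ∫ s in Icc a t, ∫ y, (w s y x - w s x y) / 2 ∂(κ x))
    (hβua : Integrable (fun x => β (u a x)) π)
    (hBpos : ∫⁻ t in Icc a b, ∫⁻ p : V × V,
        erealPos (Bbeta β' β'0 (u t p.1) (u t p.2)
          ((w t p.1 p.2 - w t p.2 p.1) / 2)) ∂(π ⊗ₘ κ) < ⊤) :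
    (∫⁻ t in Icc a b, ∫⁻ p : V × V,
        erealAbs (Bbeta β' β'0 (u t p.1) (u t p.2)
          ((w t p.1 p.2 - w t p.2 p.1) / 2)) ∂(π ⊗ₘ κ) < ⊤) ∧
    IntegrableOn (fun t => ∫ p : V × V,
        (Bbeta β' β'0 (u t p.1) (u t p.2)
          ((w t p.1 p.2 - w t p.2 p.1) / 2)).toReal ∂(π ⊗ₘ κ)) (Icc a b) ∧
    (∀ s ∈ Icc a b, ∀ t ∈ Icc a b, s ≤ t →
      (∫ x, β (u t x) ∂π) - (∫ x, β (u s x) ∂π)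
        = (1 / 2) * ∫ r in Icc s t, ∫ p : V × V,
            (Bbeta β' β'0 (u r p.1) (u r p.2)
              ((w r p.1 p.2 - w r p.2 p.1) / 2)).toReal ∂(π ⊗ₘ κ)) := by
  set θ := π ⊗ₘ κ with hθ
  set D := Dx β' β'0 with hD
  have hDc : Continuous D := Dx_cont hβ'cont hβ'lim
  have hDt : ∀ r, D r ≠ ⊤ := Dx_ne_top β' β'0 hβ'0top
  set c0 := |β' 1| with hc0
  have hc00 : 0 ≤ c0 := abs_nonneg _
  have hcn : ∀ n : ℕ, (0 : ℝ) ≤ n + c0 := fun n => by positivity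
  -- antisymmetrised flux
  set wb : ℝ × V × V → ℝ := fun z => (w z.1 z.2.1 z.2.2 - w z.1 z.2.2 z.2.1) / 2 with hwb
  have hwm2 : Measurable fun p : ℝ × V × V => w p.1 p.2.2 p.2.1 :=
    hwmeas.comp (f := fun z : ℝ × V × V => (z.1, z.2.2, z.2.1)) (by fun_prop)
  have hwbm : Measurable wb := (hwmeas.sub hwm2).div_const 2
  have hanti : ∀ t x y, wb (t, y, x) = - wb (t, x, y) := by
    intro t x y; simp only [hwb]; ring
  have hw1 : Integrable (fun p : ℝ × V × V => w p.1 p.2.1 p.2.2)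
      ((volume.restrict (Icc a b)).prod θ) := by
    refine ⟨hwmeas.aestronglyMeasurable, ?_⟩
    unfold HasFiniteIntegral
    rw [lintegral_prod _ hwmeas.enorm.aemeasurable]
    simpa only [Real.enorm_eq_ofReal_abs] using hwint
  have hw2 : Integrable (fun p : ℝ × V × V => w p.1 p.2.2 p.2.1)
      ((volume.restrict (Icc a b)).prod θ) := by
    refine ⟨hwm2.aestronglyMeasurable, ?_⟩
    unfold HasFiniteIntegral
    rw [lintegral_prod _ hwm2.enorm.aemeasurable]
    refine lt_of_le_of_lt (lintegral_mono fun t => ?_) hwint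
    have hm : Measurable fun p : V × V => ENNReal.ofReal |w t p.1 p.2| :=
      (hwmeas.comp (f := fun p : V × V => (t, p.1, p.2)) (by fun_prop)).norm.ennreal_ofReal
    conv_rhs => rw [← hdb]
    rw [lintegral_map hm measurable_swap]
    simp only [Real.enorm_eq_ofReal_abs, Prod.fst_swap, Prod.snd_swap]
    exact le_rfl
  have hwi : Integrable wb ((volume.restrict (Icc a b)).prod θ) := (hw1.sub hw2).div_const 2
  -- approximations
  set g : ℕ → ℝ → ℝ := fun n r => cl (n + c0) (D r) with hg
  have hgc : ∀ n, Continuous (g n) := fun n => (cl_cont _).comp hDc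
  have hgb : ∀ n r, |g n r| ≤ n + c0 := fun n r => cl_abs (hcn n) (hDt r)
  set G : ℕ → ℝ → ℝ := fun n r => β 1 + ∫ s in (1 : ℝ)..r, g n s with hG
  have hGd : ∀ n r, HasDerivAt (G n) (g n r) r := fun n r =>
    ((hgc n).integral_hasStrictDerivAt 1 r).hasDerivAt.const_add _
  have hfacts : ∀ r : ℝ, 0 ≤ r → (∀ n, β 1 + β' 1 * (r - 1) ≤ G n r) ∧ (∀ n, G n r ≤ β r) ∧
      Tendsto (fun n => G n r) atTop (nhds (β r)) := fun r hr =>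
    beta_facts hβcont hβconv hβderiv hβ'cont hβ'lim hr
  set bn : ℕ → ℝ × V × V → ℝ :=
    fun n z => (g n (u z.1 z.2.2) - g n (u z.1 z.2.1)) * wb z with hbn
  have hum1 : Measurable fun z : ℝ × V × V => u z.1 z.2.1 :=
    humeas.comp (f := fun z : ℝ × V × V => (z.1, z.2.1)) (by fun_prop)
  have hum2 : Measurable fun z : ℝ × V × V => u z.1 z.2.2 :=
    humeas.comp (f := fun z : ℝ × V × V => (z.1, z.2.2)) (by fun_prop)
  have hbnm : ∀ n, Measurable (bn n) := fun n =>
    (((hgc n).measurable.comp hum2).sub ((hgc n).measurable.comp hum1)).mul hwbm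
  have hbni : ∀ n, Integrable (bn n) ((volume.restrict (Icc a b)).prod θ) := by
    intro n
    refine hwi.bdd_mul (c := (n + c0) + (n + c0)) ?_ (Eventually.of_forall fun q => ?_)
    · exact (((hgc n).measurable.comp hum2).sub
        ((hgc n).measurable.comp hum1)).aestronglyMeasurable
    · exact (abs_sub _ _).trans (add_le_add (hgb n _) (hgb n _))
  set e : ℝ × V × V → EReal := fun z => dif (D (u z.1 z.2.1)) (D (u z.1 z.2.2)) * (wb z : EReal)
    with he
  have heB : ∀ t ∈ Icc a b, ∀ p : V × V, Bbeta β' β'0 (u t p.1) (u t p.2)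
      ((w t p.1 p.2 - w t p.2 p.1) / 2) = e (t, p) := by
    intro t ht p
    simp only [Bbeta, he, hwb]
    rw [Abeta_eq β' β'0 (hunonneg t ht p.1) (hunonneg t ht p.2) hβ'0top]
  set P : ℝ × V × V → ℝ≥0∞ := fun z => erealPos (e z) with hP
  set N : ℝ × V × V → ℝ≥0∞ := fun z => erealPos (- e z) with hN
  have hPle : ∀ n z, ENNReal.ofReal (bn n z) ≤ P z := fun n z =>
    (pt_pos _ _ (hDt _) (hDt _) (wb z) c0 hc00).1 n
  have hPt : ∀ z, Tendsto (fun n => ENNReal.ofReal (bn n z)) atTop (nhds (P z)) := fun z =>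
    (pt_pos _ _ (hDt _) (hDt _) (wb z) c0 hc00).2
  have hNle : ∀ n z, ENNReal.ofReal (-bn n z) ≤ N z := fun n z =>
    (pt_neg _ _ (hDt _) (hDt _) (wb z) c0 hc00).1 n
  have hNt : ∀ z, Tendsto (fun n => ENNReal.ofReal (-bn n z)) atTop (nhds (N z)) := fun z =>
    (pt_neg _ _ (hDt _) (hDt _) (wb z) c0 hc00).2
  have hPm : Measurable P := measurable_of_tendsto_metrizable
    (fun n => (hbnm n).ennreal_ofReal) (tendsto_pi_nhds.2 hPt)
  have hNm : Measurable N := measurable_of_tendsto_metrizable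
    (fun n => (hbnm n).neg.ennreal_ofReal) (tendsto_pi_nhds.2 hNt)
  have hPf : ∫⁻ z, P z ∂((volume.restrict (Icc a b)).prod θ) < ⊤ := by
    rw [lintegral_prod _ hPm.aemeasurable]
    refine lt_of_le_of_lt (le_of_eq ?_) hBpos
    refine setLIntegral_congr_fun measurableSet_Icc fun t ht => ?_
    simp only [hP]
    exact lintegral_congr fun p => by rw [heB t ht p]
  have hct : ∀ n, ∀ s ∈ Icc a b, ∀ t ∈ Icc a b, s ≤ t →
      ∫ x, G n (u t x) ∂π - ∫ x, G n (u s x) ∂π = (1 / 2) *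
        ∫ z, bn n z ∂((volume.restrict (Icc s t)).prod θ) := fun n s hs t ht hst =>
    chain_two π κ hdb humeas huint hwbm hanti hwi hce (hGd n) (hgc n) (hgb n) hs ht hst
  have hGi : ∀ n, ∀ t ∈ Icc a b, Integrable (fun x => G n (u t x)) π := fun n t ht =>
    comp_integrable π (hGd n) (hgb n) (huint t ht)
  have hLi : ∀ t ∈ Icc a b, Integrable (fun x => β 1 + β' 1 * (u t x - 1)) π := fun t ht =>
    (integrable_const _).add (((huint t ht).sub (integrable_const _)).const_mul _)
  have haI : a ∈ Icc a b := ⟨le_rfl, hab⟩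
  have hbI : b ∈ Icc a b := ⟨hab, le_rfl⟩
  have hGa : ∀ n, ∫ x, G n (u a x) ∂π ≤ ∫ x, β (u a x) ∂π := fun n =>
    integral_mono (hGi n a haI) hβua fun x => (hfacts _ (hunonneg a haI x)).2.1 n
  have hNf : ∫⁻ z, N z ∂((volume.restrict (Icc a b)).prod θ) < ⊤ := by
    refine neg_finite hbnm hbni hPle hNt hPf
      (K := 2 * (∫ x, (β 1 + β' 1 * (u b x - 1)) ∂π - ∫ x, β (u a x) ∂π)) fun n => ?_
    have h1 := hct n a haI b hbI hab
    have h2 := hGa n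
    have h3 : ∫ x, (β 1 + β' 1 * (u b x - 1)) ∂π ≤ ∫ x, G n (u b x) ∂π :=
      integral_mono (hLi b hbI) (hGi n b hbI) fun x => (hfacts _ (hunonneg b hbI x)).1 n
    linarith
  have hle : ∀ s ∈ Icc a b, ∀ t ∈ Icc a b, (volume.restrict (Icc s t)).prod θ ≤
      (volume.restrict (Icc a b) : Measure ℝ).prod θ := fun s hs t ht =>
    Measure.prod_mono (Measure.restrict_mono (Icc_subset_Icc hs.1 ht.2) le_rfl) le_rfl
  have hPf' : ∀ s ∈ Icc a b, ∀ t ∈ Icc a b,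
      ∫⁻ z, P z ∂((volume.restrict (Icc s t)).prod θ) < ⊤ := fun s hs t ht =>
    lt_of_le_of_lt (lintegral_mono' (hle s hs t ht) le_rfl) hPf
  have hNf' : ∀ s ∈ Icc a b, ∀ t ∈ Icc a b,
      ∫⁻ z, N z ∂((volume.restrict (Icc s t)).prod θ) < ⊤ := fun s hs t ht =>
    lt_of_le_of_lt (lintegral_mono' (hle s hs t ht) le_rfl) hNf
  have hlim : ∀ s ∈ Icc a b, ∀ t ∈ Icc a b,
      Tendsto (fun n => ∫ z, bn n z ∂((volume.restrict (Icc s t)).prod θ)) atTop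
        (nhds (∫ z, ((P z).toReal - (N z).toReal) ∂((volume.restrict (Icc s t)).prod θ))) :=
    fun s hs t ht =>
      dct hbnm hPm hNm hPle hNle hPt hNt (hPf' s hs t ht) (hNf' s hs t ht)
  have hβt : ∀ t ∈ Icc a b, Integrable (fun x => β (u t x)) π := by
    intro t ht
    refine beta_int (hGi · t ht) (hLi t ht)
      (M := ∫ x, β (u a x) ∂π
        + 1 / 2 * (∫⁻ z, P z ∂((volume.restrict (Icc a t)).prod θ)).toReal)
      (fun n x => (hfacts _ (hunonneg t ht x)).1 n)
      (fun x => (hfacts _ (hunonneg t ht x)).2.2) fun n => ?_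
    have h1 := hct n a haI t ht ht.1
    have h2 := hGa n
    have h3 : ∫ z, bn n z ∂((volume.restrict (Icc a t)).prod θ) ≤
        (∫⁻ z, P z ∂((volume.restrict (Icc a t)).prod θ)).toReal := by
      rw [integral_eq_lintegral_pos_part_sub_lintegral_neg_part
        ((hbni n).mono_measure (hle a haI t ht))]
      have h4 := ENNReal.toReal_mono (hPf' a haI t ht).ne
        (lintegral_mono (μ := (volume.restrict (Icc a t)).prod θ) fun z => hPle n z)
      have h5 := ENNReal.toReal_nonneg
        (a := ∫⁻ z, ENNReal.ofReal (-bn n z) ∂((volume.restrict (Icc a t)).prod θ))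
      linarith
    linarith
  have hGlim : ∀ t ∈ Icc a b,
      Tendsto (fun n => ∫ x, G n (u t x) ∂π) atTop (nhds (∫ x, β (u t x) ∂π)) := by
    intro t ht
    refine tendsto_integral_of_dominated_convergence
      (fun x => |β 1 + β' 1 * (u t x - 1)| + |β (u t x)|) (fun n => (hGi n t ht).1)
      ((hLi t ht).abs.add (hβt t ht).abs) (fun n => Eventually.of_forall fun x => ?_)
      (Eventually.of_forall fun x => (hfacts _ (hunonneg t ht x)).2.2)
    have h1 := (hfacts _ (hunonneg t ht x)).1 n
    have h2 := (hfacts _ (hunonneg t ht x)).2.1 n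
    rw [Real.norm_eq_abs]
    grind
  have hPi : Integrable (fun z => (P z).toReal) ((volume.restrict (Icc a b)).prod θ) :=
    integrable_toReal_of_lintegral_ne_top hPm.aemeasurable hPf.ne
  have hNi : Integrable (fun z => (N z).toReal) ((volume.restrict (Icc a b)).prod θ) :=
    integrable_toReal_of_lintegral_ne_top hNm.aemeasurable hNf.ne
  have hPNi : Integrable (fun z => (P z).toReal - (N z).toReal) ((volume.restrict (Icc a b)).prod θ) := hPi.sub hNi
  have hcongr : ∀ᵐ t ∂(volume.restrict (Icc a b)),
      ∫ p, ((P (t, p)).toReal - (N (t, p)).toReal) ∂θ = ∫ p : V × V,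
        (Bbeta β' β'0 (u t p.1) (u t p.2) ((w t p.1 p.2 - w t p.2 p.1) / 2)).toReal ∂θ := by
    filter_upwards [Measure.ae_ae_of_ae_prod (ae_lt_top hPm hPf.ne),
      Measure.ae_ae_of_ae_prod (ae_lt_top hNm hNf.ne), ae_restrict_mem measurableSet_Icc]
      with t h1 h2 ht
    apply integral_congr_ae
    filter_upwards [h1, h2] with p h3 h4
    rw [heB t ht p]
    exact (toReal_eq_pos_sub _ h3.ne h4.ne).symm
  refine ⟨?_, ?_, ?_⟩
  · have h1 : ∫⁻ z, (P z + N z) ∂((volume.restrict (Icc a b)).prod θ) < ⊤ := by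
      rw [lintegral_add_left hPm]
      exact ENNReal.add_lt_top.2 ⟨hPf, hNf⟩
    rw [lintegral_prod (fun z => P z + N z) (hPm.add hNm).aemeasurable] at h1
    refine lt_of_le_of_lt (le_of_eq ?_) h1
    refine setLIntegral_congr_fun measurableSet_Icc fun t ht => ?_
    exact lintegral_congr fun p => by rw [heB t ht p]; rfl
  · exact hPNi.integral_prod_left.congr hcongr
  · intro s hs t ht hst
    have h1 := ((hGlim t ht).sub (hGlim s hs)).congr (fun n => hct n s hs t ht hst)
    have h2 := tendsto_nhds_unique h1 ((hlim s hs t ht).const_mul (1 / 2))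
    rw [h2, integral_prod _ (hPNi.mono_measure (hle s hs t ht))]
    congr 1
    apply integral_congr_ae
    exact ae_restrict_of_ae_restrict_of_subset (Icc_subset_Icc hs.1 ht.2) hcongr
end

section
/- Let V be a measurable space such that the projections and the swap map s(x,y) := (y,x) on V×V are measurable, and let j be a finite signed measure on V×V. Set k := j − s_#j (where s_#j denotes the pushforward of j under s), and let k = k⁺ − k⁻ be the Jordan decomposition of k into its positive and negative parts. Then k⁻ = s_#(k⁺), and the graph divergence is unchanged when j is replaced by k⁺: x_#(k⁺) − y_#(k⁺) = x_#j − y_#j as signed measures on V, where x and y denote the first and second coordinate projections from V×V to V. -/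
open MeasureTheory

/-- Skew-symmetrization of a flux: for a finite signed measure `j` on `V×V`, setting
`k = j − s_#j` (with `s` the swap map) and taking the Jordan decomposition
`k = k⁺ − k⁻`, the negative part is the swap-pushforward of the positive part,
`k⁻ = s_#(k⁺)`, and the graph divergence is unchanged when `j` is replaced by `k⁺`:
`x_#(k⁺) − y_#(k⁺) = x_#j − y_#j`. -/
theorem skew_symmetrization_divergence
    {V : Type*} [MeasurableSpace V]
    (j : SignedMeasure (V × V)) :
    ((j - j.map Prod.swap).toJordanDecomposition.negPart
        = Measure.map Prod.swap
            (j - j.map Prod.swap).toJordanDecomposition.posPart) ∧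
    ((j - j.map Prod.swap).toJordanDecomposition.posPart.toSignedMeasure.map
          Prod.fst
        - (j - j.map Prod.swap).toJordanDecomposition.posPart.toSignedMeasure.map
          Prod.snd
      = j.map Prod.fst - j.map Prod.snd) := by
  set k := j - j.map Prod.swap with hk
  have hkapp : ∀ A : Set (V × V), MeasurableSet A → k A = j A - j (Prod.swap ⁻¹' A) := by
    intro A hA
    rw [hk, VectorMeasure.sub_apply, VectorMeasure.map_apply _ measurable_swap hA]
  have hss : ∀ A : Set (V × V), Prod.swap ⁻¹' (Prod.swap ⁻¹' A) = A := by
    intro A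
    ext ⟨a, b⟩
    rfl
  have hJ := fun (A : Set (V × V)) (hA : MeasurableSet A) =>
    SignedMeasure.apply_eq_posPart_real_sub_negPart_real k hA
  set J := k.toJordanDecomposition with hJdef
  haveI i1 := J.posPart_finite
  haveI i2 := J.negPart_finite
  have hms : (Measure.map Prod.swap J.negPart) ⟂ₘ (Measure.map Prod.swap J.posPart) := by
    obtain ⟨S, hS, h1, h2⟩ := J.mutuallySingular
    have hS' : MeasurableSet (Prod.swap ⁻¹' S) := measurable_swap hS
    refine ⟨(Prod.swap ⁻¹' S)ᶜ, hS'.compl, ?_, ?_⟩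
    · rw [Measure.map_apply measurable_swap hS'.compl, Set.preimage_compl, hss, h2]
    · rw [compl_compl, Measure.map_apply measurable_swap hS', hss, h1]
  let J' : JordanDecomposition (V × V) :=
    { posPart := Measure.map Prod.swap J.negPart
      negPart := Measure.map Prod.swap J.posPart
      posPart_finite := inferInstance
      negPart_finite := inferInstance
      mutuallySingular := hms }
  have hJ' : k = J'.toSignedMeasure := by
    ext A hA
    have hA' : MeasurableSet (Prod.swap ⁻¹' A) := measurable_swap hA
    have e1 := hJ _ hA'
    rw [hkapp _ hA', hss] at e1
    rw [JordanDecomposition.toSignedMeasure,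
      Measure.toSignedMeasure_sub_apply hA, hkapp A hA]
    simp only [J']
    rw [map_measureReal_apply measurable_swap hA, map_measureReal_apply measurable_swap hA]
    linarith
  have hJJ : J = J' := SignedMeasure.toJordanDecomposition_eq hJ'
  have hneg : J.negPart = Measure.map Prod.swap J.posPart :=
    congrArg JordanDecomposition.negPart hJJ
  refine ⟨hneg, ?_⟩
  ext A hA
  have hA1 : MeasurableSet (Prod.fst ⁻¹' A : Set (V × V)) := measurable_fst hA
  have hA2 : MeasurableSet (Prod.snd ⁻¹' A : Set (V × V)) := measurable_snd hA
  have e := hJ _ hA1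
  rw [hkapp _ hA1, hneg, map_measureReal_apply measurable_swap hA1] at e
  have e2 : (Prod.swap ⁻¹' (Prod.fst ⁻¹' A) : Set (V × V)) = Prod.snd ⁻¹' A := rfl
  rw [e2] at e
  rw [VectorMeasure.sub_apply, VectorMeasure.sub_apply,
    VectorMeasure.map_apply _ measurable_fst hA, VectorMeasure.map_apply _ measurable_snd hA,
    VectorMeasure.map_apply _ measurable_fst hA, VectorMeasure.map_apply _ measurable_snd hA,
    Measure.toSignedMeasure_apply_measurable hA1, Measure.toSignedMeasure_apply_measurable hA2]
  exact e.symm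
end
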